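/- arXiv:1408.0529 — 2 statements merged into one kernel-verified Lean document; each statement's English description precedes it below -/
import Mathlib

section
/- Let N ≥ 2, A = {1,…,N}, and let π = (π₀, π₁) with π₀(n) = n and π₁(n) = N+1−n for all n ∈ A (equivalently π₀(n) + π₁(n) = N+1 for all n). Then π is irreducible, and G(π) = Alt(A) if N is even, while G(π) = Sym(A) if N is odd. -/
open Equiv

/-- A (labeled) pair on alphabet `A`: two bijections from `A` to positions.
Positions are `Fin (Fintype.card A)`, 0-indexed: position `j : Fin N`
corresponds to the position `j+1 ∈ {1,…,N}` of the paper. -/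
abbrev RPair (A : Type*) [Fintype A] := Bool → (A ≃ Fin (Fintype.card A))

variable {A : Type*} [Fintype A]

/-- Irreducibility: `π₁(π₀⁻¹({1,…,k})) = {1,…,k}` only for `k = N`. -/
def PairIrreducible (π : RPair A) : Prop :=
  ∀ k : Fin (Fintype.card A),
    (∀ x : A, π false x ≤ k → π true x ≤ k) → (k : ℕ) + 1 = Fintype.card A

/-- Type-ε right Rauzy induction sends `π` to `π'`.  Here `zc = π_ε⁻¹(N)` and
`zo = π_{1-ε}⁻¹(N)` are characterized as the letters of maximal position. -/
def RightMove (π π' : RPair A) : Prop :=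
  ∃ ε : Bool, ∃ zc zo : A,
    (∀ x : A, π ε x ≤ π ε zc) ∧
    (∀ x : A, π (!ε) x ≤ π (!ε) zo) ∧
    π' ε = π ε ∧
    (∀ b : A, π (!ε) b ≤ π (!ε) zc → π' (!ε) b = π (!ε) b) ∧
    ((π' (!ε) zo : ℕ) = (π (!ε) zc : ℕ) + 1) ∧
    (∀ b : A, ¬ π (!ε) b ≤ π (!ε) zc → b ≠ zo → (π' (!ε) b : ℕ) = (π (!ε) b : ℕ) + 1)

/-- Type-ε left Rauzy induction sends `π` to `π'`.  Here `ac = π_ε⁻¹(1)` and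
`ao = π_{1-ε}⁻¹(1)` are characterized as the letters of minimal position. -/
def LeftMove (π π' : RPair A) : Prop :=
  ∃ ε : Bool, ∃ ac ao : A,
    (∀ x : A, π ε ac ≤ π ε x) ∧
    (∀ x : A, π (!ε) ao ≤ π (!ε) x) ∧
    π' ε = π ε ∧
    (∀ b : A, π (!ε) ac ≤ π (!ε) b → π' (!ε) b = π (!ε) b) ∧
    ((π' (!ε) ao : ℕ) = (π (!ε) ac : ℕ) - 1) ∧
    (∀ b : A, ¬ π (!ε) ac ≤ π (!ε) b → b ≠ ao → (π' (!ε) b : ℕ) = (π (!ε) b : ℕ) - 1)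

/-- The Rauzy class `R(π)`: pairs reachable by right Rauzy inductions. -/
def RClass (π : RPair A) : Set (RPair A) := {ρ | Relation.ReflTransGen RightMove π ρ}

/-- The extended Rauzy class `E(π)`: pairs reachable by left and right Rauzy inductions. -/
def EClass (π : RPair A) : Set (RPair A) :=
  {ρ | Relation.ReflTransGen (fun x y => RightMove x y ∨ LeftMove x y) π ρ}

/-- `π ∘ ν = (π₀ ∘ ν, π₁ ∘ ν)`. -/
def pairRename (π : RPair A) (ν : Equiv.Perm A) : RPair A := fun ε => ν.trans (π ε)

/-- The renaming set `G(π) = {ν : π ∘ ν ∈ E(π)}`. -/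
def renamings (π : RPair A) : Set (Equiv.Perm A) := {ν | pairRename π ν ∈ EClass π}

/-- The non-labeled permutation `π₁ ∘ π₀⁻¹`. -/
def nonlabeled (π : RPair A) : Equiv.Perm (Fin (Fintype.card A)) :=
  (π false).symm.trans (π true)

/-- The position `1` (smallest). -/
def posFirst (A : Type*) [Fintype A] [Nonempty A] : Fin (Fintype.card A) :=
  ⟨0, Fintype.card_pos⟩

/-- The position `N` (largest). -/
def posLast (A : Type*) [Fintype A] [Nonempty A] : Fin (Fintype.card A) :=
  ⟨Fintype.card A - 1, Nat.sub_lt Fintype.card_pos Nat.one_pos⟩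

/-- A pair is standard if `π₀(π₁⁻¹(1)) = π₁(π₀⁻¹(1)) = N`. -/
def PairStandard [Nonempty A] (π : RPair A) : Prop :=
  π false ((π true).symm (posFirst A)) = posLast A ∧
  π true ((π false).symm (posFirst A)) = posLast A

/-- `S` is the permutation `S(π)` of the paper. -/
def IsS [Nonempty A] (π : RPair A) (S : Equiv.Perm A) : Prop :=
  ∀ b : A,
    (π true b = posFirst A → S b = (π false).symm (posFirst A)) ∧
    (π true b ≠ posFirst A →
      (((π true b : ℕ) = (π true ((π false).symm (posLast A)) : ℕ) + 1 →
        (π false (S b) : ℕ) = (π false ((π true).symm (posLast A)) : ℕ) + 1) ∧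
      ((π true b : ℕ) ≠ (π true ((π false).symm (posLast A)) : ℕ) + 1 →
        (π false (S b) : ℕ) =
          (π false ((π true).symm
            ⟨(π true b : ℕ) - 1,
              Nat.lt_of_le_of_lt (Nat.sub_le _ _) (π true b).isLt⟩) : ℕ) + 1)))

/-- The marked letter `X(π) = π₀⁻¹(1)`. -/
def XOf [Nonempty A] (π : RPair A) : A := (π false).symm (posFirst A)

/-- `Q` is the permutation `Q(π)` of the paper (constructed from `S = S(π)`). -/
def IsQ [Nonempty A] (π : RPair A) (S Q : Equiv.Perm A) : Prop :=
  Q (XOf π) = XOf π ∧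
  ∀ b : A, b ≠ XOf π →
    (S b = XOf π → Q b = S (S b)) ∧ (S b ≠ XOf π → Q b = S b)

/-- `Λ`: the multiset of cardinalities of the orbits of `Q` on `A ∖ {X}`
(for `Q` fixing `X`): the nontrivial cycle lengths of `Q` together with one `1`
for each fixed point of `Q` other than `X`. -/
def lamOf [DecidableEq A] (Q : Equiv.Perm A) : Multiset ℕ :=
  Q.cycleType + Multiset.replicate ((Finset.univ.filter fun a => Q a = a).card - 1) 1

/-- The centralizer `Z(π)` of `(X(π), Q(π))`. -/
def ZOf [Nonempty A] (π : RPair A) (Q : Equiv.Perm A) : Set (Equiv.Perm A) :=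
  {ν | ν (XOf π) = XOf π ∧ ν⁻¹ * Q * ν = Q}

section MatrixPart
open Matrix

/-- The (labelled) intersection matrix. -/
def omegaMat (π : RPair A) : Matrix A A ℚ := fun a b =>
  (if π false a < π false b then 1 else 0) - (if π true a < π true b then 1 else 0)

theorem omegaMat_antisymm (π : RPair A) (a b : A) : omegaMat π a b = - omegaMat π b a := by
  unfold omegaMat
  by_cases hab : a = b
  · subst hab; simp
  · have h0 : π false a ≠ π false b := fun h => hab ((π false).injective h)
    have h1 : π true a ≠ π true b := fun h => hab ((π true).injective h)
    rcases lt_or_gt_of_ne h0 with h0 | h0 <;> rcases lt_or_gt_of_ne h1 with h1 | h1 <;>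
      simp [h0, h1, not_lt_of_gt h0, not_lt_of_gt h1]

theorem omegaMat_eps : ∀ ε : Bool, ∃ c : ℚ, ∀ (ρ : RPair A) a b, omegaMat ρ a b =
    c * ((if ρ ε a < ρ ε b then 1 else 0) - (if ρ (!ε) a < ρ (!ε) b then 1 else 0)) := by
  intro ε
  cases ε
  · exact ⟨1, fun ρ a b => by simp [omegaMat]⟩
  · exact ⟨-1, fun ρ a b => by simp [omegaMat]⟩

theorem transv_congr [DecidableEq A] (M M' : Matrix A A ℚ) (l w : A)
    (h1 : ∀ x y, x ≠ l → y ≠ l → M' x y = M x y)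
    (h2 : ∀ y, y ≠ l → M' l y = M l y + M w y)
    (a1 : ∀ x y, M x y = - M y x) (a2 : ∀ x y, M' x y = - M' y x) :
    M' = transvection l w 1 * M * (transvection l w 1)ᵀ := by
  have d1 : ∀ x, M x x = 0 := fun x => by linarith [a1 x x]
  have d2 : ∀ x, M' x x = 0 := fun x => by linarith [a2 x x]
  ext x y
  have e : (transvection l w (1:ℚ) * M * (transvection l w (1:ℚ))ᵀ : Matrix A A ℚ) x y =
      M x y + (if x = l then M w y else 0) + (if y = l then M x w else 0)
        + (if x = l ∧ y = l then M w w else 0) := by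
    simp only [transvection, transpose_add, transpose_one, Matrix.add_mul, Matrix.mul_add,
      Matrix.one_mul, Matrix.mul_one, Matrix.add_apply, transpose_single]
    have e1 : ∀ (K : Matrix A A ℚ) x y, (single l w (1:ℚ) * K) x y = if x = l then K w y else 0 := by
      intro K x y
      split_ifs with h
      · subst h; simp
      · exact Matrix.single_mul_apply_of_ne _ _ _ _ _ h _
    have e2 : ∀ (K : Matrix A A ℚ) x y, (K * single w l (1:ℚ)) x y = if y = l then K x w else 0 := by
      intro K x y
      split_ifs with h
      · subst h; simp
      · exact Matrix.mul_single_apply_of_ne _ _ _ _ _ h _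
    rw [e2, e2, e1, e1]
    by_cases hx : x = l <;> by_cases hy : y = l <;> simp [hx, hy] <;> ring
  rw [e]
  by_cases hx : x = l
  · by_cases hy : y = l
    · subst hx; subst hy
      simp [d1, d2]; linarith [a1 w y]
    · subst hx; simp [hy, h2 y hy]
  · by_cases hy : y = l
    · subst hy; simp [hx]; rw [a2, h2 x hx, a1 x y, a1 x w]; ring
    · simp [hx, hy, h1 x y hx hy]

theorem rightMove_omega [DecidableEq A] {π ρ : RPair A} (h : RightMove π ρ) :
    ∃ B : Matrix A A ℚ, B.det = 1 ∧ omegaMat ρ = B * omegaMat π * Bᵀ := by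
  obtain ⟨ε, w, l, hw, hl, he, h1, h2, h3⟩ := h
  have hne : l ≠ w := by
    rintro rfl
    have := (ρ (!ε) l).isLt
    have h4 := hl ((π (!ε)).symm ⟨Fintype.card A - 1, by omega⟩)
    simp [Fin.le_def] at h4
    omega
  refine ⟨transvection l w 1, det_transvection_of_ne _ _ hne _, ?_⟩
  obtain ⟨c, hc⟩ := omegaMat_eps (A := A) ε
  have inj : ∀ x y, (π (!ε) x : ℕ) = π (!ε) y → x = y := fun x y h =>
    (π (!ε)).injective (Fin.ext h)
  have val : ∀ x, x ≠ l → (ρ (!ε) x : ℕ) = if (π (!ε) x : ℕ) ≤ π (!ε) w then (π (!ε) x : ℕ)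
      else π (!ε) x + 1 := by
    intro x hx
    split_ifs with hh
    · rw [h1 x (Fin.le_def.2 hh)]
    · exact h3 x (fun h => hh (Fin.le_def.1 h)) hx
  apply transv_congr
  · intro x y hx hy
    rw [hc, hc, he]
    congr 2
    simp only [Fin.lt_def]
    rw [val x hx, val y hy]
    congr 1
    simp only [eq_iff_iff]
    split_ifs <;> omega
  · intro y hy
    rw [hc, hc, hc, he, ← mul_add]
    congr 1
    have f1 : ¬ (π (!ε) l < π (!ε) y) := not_lt.2 (hl y)
    have f2 : ¬ (π ε w < π ε y) := not_lt.2 (hw y)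
    have f3 : (ρ (!ε) l < ρ (!ε) y) ↔ (π (!ε) w < π (!ε) y) := by
      simp only [Fin.lt_def]
      rw [val y hy, h2]
      split_ifs <;> omega
    simp only [f1, f2, f3, if_false]
    ring
  · exact omegaMat_antisymm _
  · exact omegaMat_antisymm _

theorem leftMove_omega [DecidableEq A] {π ρ : RPair A} (h : LeftMove π ρ) :
    ∃ B : Matrix A A ℚ, B.det = 1 ∧ omegaMat ρ = B * omegaMat π * Bᵀ := by
  obtain ⟨ε, w, l, hw, hl, he, h1, h2, h3⟩ := h
  obtain ⟨c, hc⟩ := omegaMat_eps (A := A) ε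
  have inj : ∀ x y, (π (!ε) x : ℕ) = π (!ε) y → x = y := fun x y h =>
    (π (!ε)).injective (Fin.ext h)
  have hl' : ∀ x, (π (!ε) l : ℕ) ≤ π (!ε) x := fun x => Fin.le_def.1 (hl x)
  by_cases hne : l = w
  · refine ⟨1, det_one, ?_⟩
    subst hne
    have : ρ = π := by
      funext b
      by_cases hb : b = ε
      · rw [hb, he]
      · have hb' : b = !ε := by revert hb; clear * -; revert b ε; decide
        rw [hb']
        ext x
        rw [h1 x (hl x)]
    rw [this, transpose_one, Matrix.one_mul, Matrix.mul_one]
  refine ⟨transvection l w 1, det_transvection_of_ne _ _ hne _, ?_⟩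
  have val : ∀ x, x ≠ l → (ρ (!ε) x : ℕ) = if (π (!ε) w : ℕ) ≤ π (!ε) x then (π (!ε) x : ℕ)
      else π (!ε) x - 1 := by
    intro x hx
    split_ifs with hh
    · rw [h1 x (Fin.le_def.2 hh)]
    · exact h3 x (fun h => hh (Fin.le_def.1 h)) hx
  have pos : ∀ x, x ≠ l → (π (!ε) l : ℕ) < π (!ε) x := fun x hx =>
    lt_of_le_of_ne (hl' x) (fun h => hx (inj _ _ h).symm)
  apply transv_congr
  · intro x y hx hy
    rw [hc, hc, he]
    congr 2
    simp only [Fin.lt_def]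
    rw [val x hx, val y hy]
    have := pos x hx
    have := pos y hy
    congr 1
    simp only [eq_iff_iff]
    split_ifs <;> omega
  · intro y hy
    rw [hc, hc, hc, he, ← mul_add]
    congr 1
    have py := pos y hy
    have pw := pos w (Ne.symm hne)
    have f1 : (π (!ε) l < π (!ε) y) := py
    by_cases hyw : y = w
    · subst hyw
      have f3 : (ρ (!ε) l < ρ (!ε) y) := by
        simp only [Fin.lt_def]
        rw [val y hy, h2]
        split_ifs <;> omega
      simp [f1, f3]
    have nyw : (π (!ε) y : ℕ) ≠ π (!ε) w := fun h => hyw (inj _ _ h)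
    have f2 : (π ε w < π ε y) :=
      lt_of_le_of_ne (hw y) (fun h => hyw ((π ε).injective h).symm)
    have f3 : (ρ (!ε) l < ρ (!ε) y) ↔ (π (!ε) w < π (!ε) y) := by
      simp only [Fin.lt_def]
      rw [val y hy, h2]
      split_ifs <;> omega
    simp only [f1, f2, f3, if_true]
    ring
  · exact omegaMat_antisymm _
  · exact omegaMat_antisymm _

theorem eclass_omega [DecidableEq A] {π ρ : RPair A} (h : ρ ∈ EClass π) :
    ∃ B : Matrix A A ℚ, B.det = 1 ∧ omegaMat ρ = B * omegaMat π * Bᵀ := by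
  have h' : Relation.ReflTransGen (fun x y => RightMove x y ∨ LeftMove x y) π ρ := h
  clear h
  induction h' with
  | refl => exact ⟨1, det_one, by simp⟩
  | tail _ hs ih =>
    obtain ⟨B, hB, e⟩ := ih
    obtain ⟨C, hC, e'⟩ : ∃ B : Matrix A A ℚ, B.det = 1 ∧ _ = B * _ * Bᵀ :=
      hs.elim rightMove_omega leftMove_omega
    refine ⟨C * B, by simp [hB, hC], ?_⟩
    rw [e', e, transpose_mul]
    simp only [Matrix.mul_assoc]

theorem det_one_of_congr {l : Type*} [Fintype l] [DecidableEq l]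
    (P C : Matrix (l ⊕ l) (l ⊕ l) ℚ) (hP : IsUnit P)
    (h : C * (P * J l ℚ * Pᵀ) * Cᵀ = P * J l ℚ * Pᵀ) : C.det = 1 := by
  obtain ⟨u, rfl⟩ := hP
  set Q : Matrix (l ⊕ l) (l ⊕ l) ℚ := (u⁻¹).val with hQ
  set P : Matrix (l ⊕ l) (l ⊕ l) ℚ := u.val with hP
  have h1 : Q * P = 1 := by simp [hQ, hP]
  have h2 : Pᵀ * Qᵀ = 1 := by rw [← transpose_mul, h1, transpose_one]
  have hm : Q * C * P ∈ symplecticGroup l ℚ := by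
    rw [SymplecticGroup.mem_iff]
    calc Q * C * P * J l ℚ * (Q * C * P)ᵀ
        = Q * (C * (P * J l ℚ * Pᵀ) * Cᵀ) * Qᵀ := by
          simp only [transpose_mul, Matrix.mul_assoc]
      _ = (Q * P) * J l ℚ * (Pᵀ * Qᵀ) := by rw [h]; simp only [Matrix.mul_assoc]
      _ = J l ℚ := by rw [h1, h2]; simp
  have := SymplecticGroup.det_eq_one hm
  rw [det_mul, det_mul] at this
  have h3 : Q.det * P.det = 1 := by rw [← det_mul, h1, det_one]
  calc C.det = C.det * (Q.det * P.det) := by rw [h3, mul_one]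
    _ = 1 := by rw [← this]; ring

theorem even_renamings [DecidableEq A] (π : RPair A)
    (h : ∀ x : A, (π false x : ℕ) + (π true x : ℕ) + 1 = Fintype.card A)
    (hev : Even (Fintype.card A)) (ν : Equiv.Perm A) (hν : ν ∈ renamings π) :
    Equiv.Perm.sign ν = 1 := by
  obtain ⟨B, hB, e⟩ := eclass_omega (show pairRename π ν ∈ EClass π from hν)
  obtain ⟨m, hm⟩ := hev
  let q : Fin m ⊕ Fin m ≃ A := Fintype.equivOfCardEq (by simp [hm])
  let P : Matrix (Fin m ⊕ Fin m) (Fin m ⊕ Fin m) ℚ := fun a s =>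
    Sum.elim (fun k : Fin m => if (k : ℕ) = (π false (q a) : ℕ) / 2 then (1:ℚ) else 0)
      (fun j : Fin m => if 2 * (j : ℕ) < (π false (q a) : ℕ) then (-1:ℚ) else 0) s
  have lt : ∀ a, (π false a : ℕ) / 2 < m := fun a => by have := (π false a).isLt; omega
  have hP : IsUnit P := by
    rw [← mulVec_injective_iff_isUnit]
    have key : ∀ v, P *ᵥ v = 0 → v = 0 := by
      intro v hv
      have ev : ∀ a, v (Sum.inl ⟨(π false a : ℕ) / 2, lt a⟩) =
          ∑ j : Fin m, if 2 * (j : ℕ) < (π false a : ℕ) then v (Sum.inr j) else 0 := by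
        intro a
        have := congrFun hv (q.symm a)
        simp only [mulVec, dotProduct, Fintype.sum_sum_type, P, Sum.elim_inl, Sum.elim_inr,
          Equiv.apply_symm_apply, ite_mul, one_mul, zero_mul, Pi.zero_apply, neg_mul] at this
        rw [Finset.sum_eq_single (⟨(π false a : ℕ) / 2, lt a⟩ : Fin m)] at this
        · rw [if_pos rfl] at this
          rw [eq_neg_of_add_eq_zero_left this, ← Finset.sum_neg_distrib]
          refine Finset.sum_congr rfl fun j _ => ?_
          split_ifs <;> simp
        · intro b _ hb
          rw [if_neg]
          intro hh; exact hb (Fin.ext hh)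
        · simp
      have hr : ∀ k : Fin m, v (Sum.inr k) = 0 := by
        intro k
        have e1 := ev ((π false).symm ⟨2 * k, by omega⟩)
        have e2 := ev ((π false).symm ⟨2 * k + 1, by omega⟩)
        simp only [Equiv.apply_symm_apply] at e1 e2
        have e3 : (2 * (k:ℕ) + 1) / 2 = 2 * (k : ℕ) / 2 := by omega
        simp only [e3] at e2
        rw [e1, ← sub_eq_zero, ← Finset.sum_sub_distrib, Finset.sum_eq_single k] at e2
        · simpa using e2
        · intro b _ hb
          have : (b : ℕ) ≠ k := fun hh => hb (Fin.ext hh)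
          split_ifs <;> first | omega | simp
        · simp
      funext s
      rcases s with k | k
      · have e1 := ev ((π false).symm ⟨2 * k, by omega⟩)
        simp only [hr, Equiv.apply_symm_apply, ite_self, Finset.sum_const_zero] at e1
        have e3 : (⟨2 * (k:ℕ) / 2, by omega⟩ : Fin m) = k := Fin.ext (by simp)
        rw [e3] at e1
        simpa using e1
      · exact hr k
    intro v w hvw
    have := key (v - w) (by rw [mulVec_sub]; exact sub_eq_zero.2 hvw)
    exact sub_eq_zero.1 this
  have hO : (omegaMat π).submatrix q q = P * J (Fin m) ℚ * Pᵀ := by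
    ext a b
    have hlt : ∀ x y, (π true x < π true y) ↔ (π false y < π false x) := by
      intro x y
      have := h x
      have := h y
      simp only [Fin.lt_def]; omega
    simp only [submatrix_apply, omegaMat, hlt]
    have e1 : ∀ s, (P * J (Fin m) ℚ) a s = Sum.elim (fun k => P a (Sum.inr k))
        (fun k => - P a (Sum.inl k)) s := by
      intro s
      rcases s with k | k <;>
        simp [Matrix.mul_apply, J, Matrix.one_apply]
    rw [Matrix.mul_apply, Fintype.sum_sum_type]
    simp only [e1, Sum.elim_inl, Sum.elim_inr, transpose_apply]
    rw [Finset.sum_eq_single (⟨(π false (q b) : ℕ) / 2, lt _⟩ : Fin m),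
      Finset.sum_eq_single (⟨(π false (q a) : ℕ) / 2, lt _⟩ : Fin m)]
    · simp only [P, Sum.elim_inl, Sum.elim_inr, Fin.lt_def, if_true]
      split_ifs <;> first | omega | norm_num
    · intro c _ hc
      have : (c : ℕ) ≠ (π false (q a) : ℕ) / 2 := fun hh => hc (Fin.ext hh)
      simp [P, this]
    · simp
    · intro c _ hc
      have : (c : ℕ) ≠ (π false (q b) : ℕ) / 2 := fun hh => hc (Fin.ext hh)
      simp [P, this]
    · simp
  set C := B.submatrix ν.symm id with hC
  have hCO : C * omegaMat π * Cᵀ = omegaMat π := by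
    have : C * omegaMat π * Cᵀ = (B * omegaMat π * Bᵀ).submatrix ν.symm ν.symm := by
      ext a b; simp [hC, Matrix.mul_apply]
    rw [this, ← e]
    ext a b
    simp [omegaMat, pairRename]
  have hd : (C.submatrix q q).det = 1 := by
    apply det_one_of_congr P _ hP
    rw [← hO, transpose_submatrix, submatrix_mul_equiv, submatrix_mul_equiv, hCO]
  rw [det_submatrix_equiv_self, hC, det_permute, hB, mul_one] at hd
  have : Equiv.Perm.sign ν.symm = 1 := by
    rcases Int.units_eq_one_or (Equiv.Perm.sign ν.symm) with h | h
    · exact h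
    · rw [h] at hd; norm_num at hd
  simpa using this

end MatrixPart

section GroupPart

/-- fixes the last position, shifts the others down cyclically -/
def dPerm (n : ℕ) (hn : 2 ≤ n) : Equiv.Perm (Fin n) where
  toFun j := if (j : ℕ) = n - 1 then j else if (j : ℕ) = 0 then ⟨n - 2, by omega⟩
    else ⟨j - 1, by omega⟩
  invFun j := if hj : (j : ℕ) = n - 1 then j else if (j : ℕ) = n - 2 then ⟨0, by omega⟩
    else ⟨j + 1, by omega⟩
  left_inv j := by
    apply Fin.ext
    have := j.isLt
    grind
  right_inv j := by
    apply Fin.ext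
    have := j.isLt
    grind

/-- fixes the first position, shifts the others up cyclically -/
def cPerm (n : ℕ) (hn : 2 ≤ n) : Equiv.Perm (Fin n) :=
  (Fin.revPerm.trans (dPerm n hn)).trans Fin.revPerm

theorem dPerm_val (n : ℕ) (hn : 2 ≤ n) (j : Fin n) : (dPerm n hn j : ℕ) =
    if (j : ℕ) = n - 1 then (j : ℕ) else if (j : ℕ) = 0 then n - 2 else j - 1 := by
  simp only [dPerm, Equiv.coe_fn_mk]
  split_ifs <;> rfl

theorem cPerm_val (n : ℕ) (hn : 2 ≤ n) (j : Fin n) : (cPerm n hn j : ℕ) =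
    if (j : ℕ) = 0 then (j : ℕ) else if (j : ℕ) = n - 1 then 1 else j + 1 := by
  simp only [cPerm, Equiv.trans_apply, Fin.revPerm_apply, Fin.val_rev, dPerm_val]
  have := j.isLt
  split_ifs <;> omega

theorem sign_dPerm (n : ℕ) (hn : 2 ≤ n) (hodd : Odd n) : Equiv.Perm.sign (dPerm n hn) = -1 := by
  have h1 : dPerm n hn * Fin.cycleRange ⟨n - 2, by omega⟩ = 1 := by
    ext j
    simp only [Equiv.Perm.mul_apply, Equiv.Perm.one_apply, dPerm_val]
    rcases lt_trichotomy j ⟨n - 2, by omega⟩ with h | h | h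
    · rw [Fin.coe_cycleRange_of_lt h]
      simp only [Fin.lt_def] at h
      rw [if_neg (by omega), if_neg (by omega)]
      omega
    · rw [Fin.coe_cycleRange_of_le h.le, if_pos h, h]
      have : (0 : ℕ) ≠ n - 1 := by omega
      simp [this]
    · rw [Fin.cycleRange_of_gt h]
      simp only [Fin.lt_def] at h
      split_ifs <;> omega
  have h2 := congrArg Equiv.Perm.sign h1
  rw [map_mul, Fin.sign_cycleRange, map_one] at h2
  have : Odd (n - 2) := by
    obtain ⟨k, hk⟩ := hodd
    exact ⟨k - 1, by omega⟩
  simp only [this.neg_one_pow] at h2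
  rcases Int.units_eq_one_or (Equiv.Perm.sign (dPerm n hn)) with h | h
  · rw [h] at h2; exact absurd h2 (by decide)
  · exact h

/-- the basic renaming -/
def nuPerm (hN : 2 ≤ Fintype.card A) (π : RPair A) (ε : Bool) : Equiv.Perm A :=
  ((π ε).trans (dPerm _ hN)).trans (π ε).symm

theorem nuPerm_val (hN : 2 ≤ Fintype.card A) (π : RPair A) (ε : Bool) (x : A) :
    (π ε (nuPerm hN π ε x) : ℕ) =
    if (π ε x : ℕ) = Fintype.card A - 1 then (π ε x : ℕ)
      else if (π ε x : ℕ) = 0 then Fintype.card A - 2 else π ε x - 1 := by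
  simp [nuPerm, dPerm_val]

theorem nuPerm_mem (hN : 2 ≤ Fintype.card A) (π : RPair A) (ε : Bool)
    (h : ∀ x : A, (π false x : ℕ) + (π true x : ℕ) + 1 = Fintype.card A) :
    nuPerm hN π ε ∈ renamings π := by
  have h' : ∀ x, (π ε x : ℕ) + (π (!ε) x : ℕ) + 1 = Fintype.card A := by
    intro x; cases ε
    · exact h x
    · have := h x; simp only [Bool.not_true]; omega
  let π₁ : RPair A := Function.update π (!ε) ((π (!ε)).trans (cPerm _ hN))
  have a1 : π₁ (!ε) = (π (!ε)).trans (cPerm _ hN) := by simp [π₁]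
  have a2 : π₁ ε = π ε := by simp [π₁]
  have b1 : pairRename π (nuPerm hN π ε) (!ε) = π₁ (!ε) := by
    rw [a1]
    ext x
    simp only [pairRename, Equiv.trans_apply, cPerm_val]
    have e1 := h' (nuPerm hN π ε x)
    rw [nuPerm_val] at e1
    have e2 := h' x
    split_ifs at e1 ⊢ <;> omega
  have b2 : ∀ x, (pairRename π (nuPerm hN π ε) ε x : ℕ) = _ := nuPerm_val hN π ε
  let z : A := (π ε).symm ⟨Fintype.card A - 1, by omega⟩
  let o : A := (π ε).symm ⟨0, by omega⟩
  have hz : (π ε z : ℕ) = Fintype.card A - 1 := by simp [z]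
  have ho : (π ε o : ℕ) = 0 := by simp [o]
  have hz' := h' z
  have ho' := h' o
  have ne : ∀ x, x ≠ o → (π ε x : ℕ) ≠ 0 := fun x hx hh =>
    hx ((π ε).injective (Fin.ext (hh.trans ho.symm)))
  have r : RightMove π π₁ := by
    refine ⟨ε, z, o, ?_, ?_, a2, ?_, ?_, ?_⟩
    · intro x
      have := (π ε x).isLt
      rw [Fin.le_def]; omega
    · intro x
      have := h' x
      rw [Fin.le_def]; omega
    · intro b hb
      rw [Fin.le_def] at hb
      apply Fin.ext
      rw [a1]
      simp only [Equiv.trans_apply, cPerm_val]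
      rw [if_pos (by omega)]
    · rw [a1]
      simp only [Equiv.trans_apply, cPerm_val]
      split_ifs <;> omega
    · intro b hb hbo
      rw [Fin.le_def] at hb
      have := ne b hbo
      have := h' b
      rw [a1]
      simp only [Equiv.trans_apply, cPerm_val]
      split_ifs <;> omega
  have l : LeftMove π₁ (pairRename π (nuPerm hN π ε)) := by
    have a3 : π₁ (!(!ε)) = π ε := by rw [Bool.not_not, a2]
    refine ⟨!ε, z, o, ?_, ?_, b1, ?_, ?_, ?_⟩
    · intro x
      rw [a1, Fin.le_def]
      simp only [Equiv.trans_apply, cPerm_val]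
      rw [if_pos (by omega)]
      omega
    · intro x
      rw [a3, Fin.le_def]; omega
    · intro b hb
      rw [a3, Fin.le_def] at hb
      have := (π ε b).isLt
      apply Fin.ext
      rw [a3, Bool.not_not, b2, if_pos (by omega)]
    · rw [a3, Bool.not_not, b2]
      split_ifs <;> omega
    · intro b hb hbo
      rw [a3, Fin.le_def] at hb
      have := ne b hbo
      rw [a3, Bool.not_not, b2]
      split_ifs <;> omega
  have hr : Relation.ReflTransGen (fun x y => RightMove x y ∨ LeftMove x y) π π₁ :=
    Relation.ReflTransGen.single (Or.inl r)
  exact Relation.ReflTransGen.tail hr (Or.inr l)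

theorem rightMove_rename {π ρ : RPair A} (ν : Equiv.Perm A) (h : RightMove π ρ) :
    RightMove (pairRename π ν) (pairRename ρ ν) := by
  obtain ⟨ε, w, l, hw, hl, he, h1, h2, h3⟩ := h
  refine ⟨ε, ν.symm w, ν.symm l, ?_, ?_, ?_, ?_, ?_, ?_⟩
  · intro x; simpa [pairRename] using hw (ν x)
  · intro x; simpa [pairRename] using hl (ν x)
  · simp [pairRename, he]
  · intro b hb; simpa [pairRename] using h1 (ν b) (by simpa [pairRename] using hb)
  · simpa [pairRename] using h2
  · intro b hb hbl
    simpa [pairRename] using h3 (ν b) (by simpa [pairRename] using hb)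
      (fun h => hbl (by rw [← h]; simp))

theorem leftMove_rename {π ρ : RPair A} (ν : Equiv.Perm A) (h : LeftMove π ρ) :
    LeftMove (pairRename π ν) (pairRename ρ ν) := by
  obtain ⟨ε, w, l, hw, hl, he, h1, h2, h3⟩ := h
  refine ⟨ε, ν.symm w, ν.symm l, ?_, ?_, ?_, ?_, ?_, ?_⟩
  · intro x; simpa [pairRename] using hw (ν x)
  · intro x; simpa [pairRename] using hl (ν x)
  · simp [pairRename, he]
  · intro b hb; simpa [pairRename] using h1 (ν b) (by simpa [pairRename] using hb)
  · simpa [pairRename] using h2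
  · intro b hb hbl
    simpa [pairRename] using h3 (ν b) (by simpa [pairRename] using hb)
      (fun h => hbl (by rw [← h]; simp))

theorem renamings_mul {π : RPair A} {μ ν : Equiv.Perm A} (hμ : μ ∈ renamings π)
    (hν : ν ∈ renamings π) : μ * ν ∈ renamings π := by
  have h0 : Relation.ReflTransGen (fun x y => RightMove x y ∨ LeftMove x y)
      π (pairRename π μ) := hμ
  have h1 : Relation.ReflTransGen (fun x y => RightMove x y ∨ LeftMove x y)
      (pairRename π ν) (pairRename (pairRename π μ) ν) :=
    Relation.ReflTransGen.lift (fun ρ => pairRename ρ ν)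
      (fun a b h => Or.imp (rightMove_rename ν) (leftMove_rename ν) h) _ _ h0
  exact Relation.ReflTransGen.trans hν h1

theorem renamings_one {π : RPair A} : (1 : Equiv.Perm A) ∈ renamings π :=
  Relation.ReflTransGen.refl

/-- the renaming group -/
def renGroup (π : RPair A) : Subgroup (Equiv.Perm A) where
  carrier := renamings π
  mul_mem' := renamings_mul
  one_mem' := renamings_one
  inv_mem' := by
    intro ν hν
    have hp : ∀ k : ℕ, ν ^ k ∈ renamings π := by
      intro k
      induction k with
      | zero => exact renamings_one
      | succ k ih => rw [pow_succ]; exact renamings_mul ih hν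
    have h1 : ν⁻¹ = ν ^ (orderOf ν - 1) := by
      rw [inv_eq_iff_mul_eq_one, ← pow_succ', Nat.sub_add_cancel (orderOf_pos ν),
        pow_orderOf_eq_one]
    rw [h1]
    exact hp _

theorem alt_le [DecidableEq A] (hN : 3 ≤ Fintype.card A) (π : RPair A)
    (h : ∀ x : A, (π false x : ℕ) + (π true x : ℕ) + 1 = Fintype.card A) :
    alternatingGroup A ≤ renGroup π := by
  have hN2 : 2 ≤ Fintype.card A := by omega
  set c := nuPerm hN2 π false with hc
  set c' := nuPerm hN2 π true with hc'
  have mc : c ∈ renGroup π := nuPerm_mem hN2 π false h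
  have mc' : c' ∈ renGroup π := nuPerm_mem hN2 π true h
  have vc : ∀ x, (π false (c x) : ℕ) = if (π false x : ℕ) = Fintype.card A - 1 then
      (π false x : ℕ) else if (π false x : ℕ) = 0 then Fintype.card A - 2 else π false x - 1 :=
    nuPerm_val hN2 π false
  have vc' : ∀ x, (π false (c' x) : ℕ) = if (π false x : ℕ) = 0 then
      (0 : ℕ) else if (π false x : ℕ) = Fintype.card A - 1 then (1 : ℕ) else (π false x : ℕ) + 1 := by
    intro x
    have h1 := nuPerm_val hN2 π true x
    rw [← hc'] at h1
    have h2 := h x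
    have h3 := h (c' x)
    split_ifs at h1 ⊢ <;> omega
  have inj : ∀ x y, (π false x : ℕ) = π false y → x = y := fun x y h =>
    (π false).injective (Fin.ext h)
  obtain ⟨z, hz⟩ : ∃ z, (π false z : ℕ) = Fintype.card A - 1 :=
    ⟨(π false).symm ⟨Fintype.card A - 1, by omega⟩, by simp⟩
  obtain ⟨y, hy⟩ : ∃ z, (π false z : ℕ) = Fintype.card A - 2 :=
    ⟨(π false).symm ⟨Fintype.card A - 2, by omega⟩, by simp⟩
  obtain ⟨o, ho⟩ : ∃ z, (π false z : ℕ) = 0 :=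
    ⟨(π false).symm ⟨0, by omega⟩, by simp⟩
  have s1 : ∀ k, ∀ a, (π false a : ℕ) ≠ 0 → Fintype.card A - 1 - (π false a : ℕ) = k →
      ∃ g ∈ renGroup π, g a = z := by
    intro k
    induction k with
    | zero =>
      intro a _ ha
      have := (π false a).isLt
      exact ⟨1, one_mem _, inj _ _ (by simp only [Equiv.Perm.one_apply]; omega)⟩
    | succ k ih =>
      intro a h0 ha
      have hv := vc' a
      rw [if_neg h0, if_neg (by omega)] at hv
      obtain ⟨g, hg, hga⟩ := ih (c' a) (by omega) (by omega)
      exact ⟨g * c', mul_mem hg mc', hga⟩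
  have s1' : ∀ a, ∃ g ∈ renGroup π, g a = z := by
    intro a
    by_cases h0 : (π false a : ℕ) = 0
    · have hv := vc a
      rw [if_neg (by omega), if_pos h0] at hv
      obtain ⟨g, hg, hga⟩ := s1 _ (c a) (by omega) rfl
      exact ⟨g * c, mul_mem hg mc, hga⟩
    · exact s1 _ a h0 rfl
  have cz : c z = z := inj _ _ (by rw [vc, if_pos hz])
  have s2 : ∀ k, ∀ b, b ≠ z → (π false b : ℕ) = k → ∃ g ∈ renGroup π, g z = z ∧ g b = o := by
    intro k
    induction k with
    | zero => intro b _ hb; exact ⟨1, one_mem _, rfl, inj _ _ (hb.trans ho.symm)⟩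
    | succ k ih =>
      intro b hbz hb
      have hne : (π false b : ℕ) ≠ Fintype.card A - 1 := fun hh => hbz (inj _ _ (hh.trans hz.symm))
      have hv := vc b
      rw [if_neg hne, if_neg (by omega)] at hv
      obtain ⟨g, hg, h1, h2⟩ := ih (c b) (fun hh => hbz (by
        rw [← cz] at hh; exact c.injective hh)) (by omega)
      exact ⟨g * c, mul_mem hg mc, by simp [cz, h1], h2⟩
  have s3 : ∀ a b, a ≠ b → ∃ g ∈ renGroup π, g a = z ∧ g b = o := by
    intro a b hab
    obtain ⟨g, hg, hga⟩ := s1' a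
    obtain ⟨g', hg', h1, h2⟩ := s2 _ (g b) (fun hh => hab (g.injective (hga.trans hh.symm))) rfl
    exact ⟨g' * g, mul_mem hg' hg, by simp [hga, h1], h2⟩
  have two : MulAction.IsMultiplyPretransitive (renGroup π) A 2 := by
    rw [MulAction.is_two_pretransitive_iff]
    intro a b a' b' hab hab'
    obtain ⟨g, hg, h1, h2⟩ := s3 a b hab
    obtain ⟨g', hg', h1', h2'⟩ := s3 a' b' hab'
    refine ⟨⟨g'⁻¹ * g, mul_mem (inv_mem hg') hg⟩, ?_, ?_⟩
    · change g'⁻¹ (g a) = a'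
      rw [h1, ← h1']; simp
    · change g'⁻¹ (g b) = b'
      rw [h2, ← h2']; simp
  refine Equiv.Perm.alternatingGroup_le_of_isPreprimitive_of_isThreeCycle_mem
    (MulAction.isPreprimitive_of_is_two_pretransitive two) (g := c * c') ?_ (mul_mem mc mc')
  rw [← card_support_eq_three_iff, Finset.card_eq_three]
  refine ⟨o, y, z, ?_, ?_, ?_, ?_⟩
  · rintro rfl; omega
  · rintro rfl; omega
  · rintro rfl; omega
  · ext x
    have v1 := vc (c' x)
    have v2 := vc' x
    have hx := (π false x).isLt
    have i1 : x = o ↔ (π false x : ℕ) = 0 := ⟨fun hh => hh ▸ ho, fun hh => inj _ _ (hh.trans ho.symm)⟩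
    have i2 : x = y ↔ (π false x : ℕ) = Fintype.card A - 2 :=
      ⟨fun hh => hh ▸ hy, fun hh => inj _ _ (hh.trans hy.symm)⟩
    have i3 : x = z ↔ (π false x : ℕ) = Fintype.card A - 1 :=
      ⟨fun hh => hh ▸ hz, fun hh => inj _ _ (hh.trans hz.symm)⟩
    have i4 : c (c' x) = x ↔ (π false (c (c' x)) : ℕ) = π false x :=
      ⟨fun hh => by rw [hh], fun hh => inj _ _ hh⟩
    simp only [Equiv.Perm.mem_support, Equiv.Perm.mul_apply, Finset.mem_insert,
      Finset.mem_singleton, ne_eq, i1, i2, i3, i4]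
    rw [v1]
    split_ifs at v2 ⊢ <;> omega

end GroupPart

/-- for the pair on `A = {1,…,N}` with `π₀(n) = n`,
`π₁(n) = N+1−n` (equivalently `π₀(n) + π₁(n) = N+1`, i.e. 0-indexed
`π₀(x) + π₁(x) + 1 = N` for all letters `x`), `π` is irreducible, and
`G(π) = Alt(A)` for `N` even, `G(π) = Sym(A)` for `N` odd. -/
theorem stmt10 {A : Type*} [Fintype A] [DecidableEq A] [Nonempty A]
    (hN : 2 ≤ Fintype.card A) (π : RPair A)
    (h : ∀ x : A, (π false x : ℕ) + (π true x : ℕ) + 1 = Fintype.card A) :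
    PairIrreducible π ∧
    (Even (Fintype.card A) →
      renamings π = (alternatingGroup A : Set (Equiv.Perm A))) ∧
    (Odd (Fintype.card A) → renamings π = Set.univ) := by
  refine ⟨?_, ?_, ?_⟩
  · intro k hk
    have h1 := hk ((π false).symm ⟨0, by omega⟩) (by simp [Fin.le_def])
    have h2 := h ((π false).symm ⟨0, by omega⟩)
    rw [Fin.le_def] at h1
    rw [Equiv.apply_symm_apply] at h2
    have := k.isLt
    simp only at h2
    omega
  · intro hev
    ext ν
    constructor
    · intro hν
      exact Equiv.Perm.mem_alternatingGroup.2 (even_renamings π h hev ν hν)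
    · intro hν
      by_cases h3 : 3 ≤ Fintype.card A
      · exact alt_le h3 π h hν
      · have h2 : Fintype.card A = 2 := by omega
        have : Nontrivial A := Fintype.one_lt_card_iff_nontrivial.1 (by omega)
        have hc := two_mul_card_alternatingGroup (α := A)
        rw [Fintype.card_perm, h2] at hc
        have hc' : Fintype.card (alternatingGroup A) ≤ 1 := by
          simp only [Nat.factorial] at hc; omega
        have hs := Fintype.card_le_one_iff.1 hc' ⟨ν, hν⟩ 1
        have : ν = 1 := congrArg Subtype.val hs
        rw [this]
        exact renamings_one
  · intro hodd
    have h3 : 3 ≤ Fintype.card A := by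
      obtain ⟨k, hk⟩ := hodd; omega
    have hle := alt_le h3 π h
    have hs : Equiv.Perm.sign (nuPerm hN π false) = -1 := by
      rw [nuPerm, Equiv.Perm.sign_trans_trans_symm, sign_dPerm _ hN hodd]
    have hm : nuPerm hN π false ∈ renGroup π := nuPerm_mem hN π false h
    rw [Set.eq_univ_iff_forall]
    intro ν
    change ν ∈ renGroup π
    rcases Int.units_eq_one_or (Equiv.Perm.sign ν) with h1 | h1
    · exact hle (Equiv.Perm.mem_alternatingGroup.2 h1)
    · rw [← Subgroup.mul_mem_cancel_left _ hm]
      exact hle (Equiv.Perm.mem_alternatingGroup.2 (by rw [map_mul, hs, h1]; decide))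
end

section
/- Let m, n ≥ 0 and let A = {a, b₁,…,b_m, c₁,…,c_m, d, e, f, g₁,…,g_n, h₁,…,h_n, z} consist of 2m+2n+5 distinct letters. Let π be the pair on A with π₀ listing A in the order a, b₁, c₁, b₂, c₂, …, b_m, c_m, d, e, f, g₁, h₁, g₂, h₂, …, g_n, h_n, z and π₁ listing A in the order z, c₁, b₁, c₂, b₂, …, c_m, b_m, f, e, d, h₁, g₁, h₂, g₂, …, h_n, g_n, a. Then π is irreducible and Alt(A) ⊆ G(π); moreover, if m = n then G(π) = Sym(A). -/
open Equiv

variable {A : Type*} [Fintype A]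

namespace RZ

inductive St {A : Type*} : List A × List A → List A × List A → Prop
  | r0 (T : List A) (w : A) (P S : List A) (l : A) :
      St (T ++ [w], P ++ w :: (S ++ [l])) (T ++ [w], P ++ w :: l :: S)
  | r1 (T : List A) (w : A) (P S : List A) (l : A) :
      St (P ++ w :: (S ++ [l]), T ++ [w]) (P ++ w :: l :: S, T ++ [w])
  | l0 (T : List A) (w : A) (P S : List A) (l : A) :
      St (w :: T, l :: (S ++ w :: P)) (w :: T, S ++ l :: w :: P)
  | l1 (T : List A) (w : A) (P S : List A) (l : A) :
      St (l :: (S ++ w :: P), w :: T) (S ++ l :: w :: P, w :: T)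

def Rch {A : Type*} : List A × List A → List A × List A → Prop := Relation.ReflTransGen St

section
variable {A : Type*}

theorem Rch.refl (s : List A × List A) : Rch s s := Relation.ReflTransGen.refl

theorem Rch.trans {s t u : List A × List A} (h : Rch s t) (h' : Rch t u) : Rch s u :=
  Relation.ReflTransGen.trans h h'

theorem br0 (T : List A) (w : A) (P L : List A) : ∀ S : List A,
    Rch (T ++ [w], P ++ w :: (S ++ L)) (T ++ [w], P ++ w :: (L ++ S)) := by
  induction L using List.reverseRecOn with
  | nil => intro S; simpa using Rch.refl _
  | append_singleton L l ih =>
    intro S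
    have h1 := Relation.ReflTransGen.single (St.r0 T w P (S ++ L) l)
    have h2 := ih (l :: S)
    have := Rch.trans h1 (by simpa using h2)
    simpa using this

theorem br1 (T : List A) (w : A) (P L : List A) : ∀ S : List A,
    Rch (P ++ w :: (S ++ L), T ++ [w]) (P ++ w :: (L ++ S), T ++ [w]) := by
  induction L using List.reverseRecOn with
  | nil => intro S; simpa using Rch.refl _
  | append_singleton L l ih =>
    intro S
    have h1 := Relation.ReflTransGen.single (St.r1 T w P (S ++ L) l)
    have h2 := ih (l :: S)
    have := Rch.trans h1 (by simpa using h2)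
    simpa using this

theorem bl0 (T : List A) (w : A) (P L : List A) : ∀ S : List A,
    Rch (w :: T, L ++ (S ++ w :: P)) (w :: T, S ++ (L ++ w :: P)) := by
  induction L with
  | nil => intro S; simpa using Rch.refl _
  | cons l L ih =>
    intro S
    have h1 := Relation.ReflTransGen.single (St.l0 T w P (L ++ S) l)
    have h2 := ih (S ++ [l])
    have := Rch.trans h1 (by simpa using h2)
    simpa using this

theorem bl1 (T : List A) (w : A) (P L : List A) : ∀ S : List A,
    Rch (L ++ (S ++ w :: P), w :: T) (S ++ (L ++ w :: P), w :: T) := by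
  induction L with
  | nil => intro S; simpa using Rch.refl _
  | cons l L ih =>
    intro S
    have h1 := Relation.ReflTransGen.single (St.l1 T w P (L ++ S) l)
    have h2 := ih (S ++ [l])
    have := Rch.trans h1 (by simpa using h2)
    simpa using this

theorem St.symm {s t : List A × List A} (h : St s t) : Rch t s := by
  cases h with
  | r0 T w P S l => simpa using br0 T w P S [l]
  | r1 T w P S l => simpa using br1 T w P S [l]
  | l0 T w P S l => simpa using bl0 T w P S [l]
  | l1 T w P S l => simpa using bl1 T w P S [l]

theorem Rch.symm {s t : List A × List A} (h : Rch s t) : Rch t s := by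
  induction h with
  | refl => exact Rch.refl _
  | tail _ h ih => exact Rch.trans h.symm ih

/-- renaming of a word pair -/
def mp (σ : Equiv.Perm A) (s : List A × List A) : List A × List A := (s.1.map σ, s.2.map σ)

theorem mp_mul (σ τ : Equiv.Perm A) (s : List A × List A) : mp (σ * τ) s = mp σ (mp τ s) := by
  simp [mp]

theorem mp_one (s : List A × List A) : mp 1 s = s := by
  simp [mp]

theorem St.map (σ : Equiv.Perm A) {s t : List A × List A} (h : St s t) : St (mp σ s) (mp σ t) := by
  cases h with
  | r0 T w P S l => simpa [mp] using St.r0 (T.map σ) (σ w) (P.map σ) (S.map σ) (σ l)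
  | r1 T w P S l => simpa [mp] using St.r1 (T.map σ) (σ w) (P.map σ) (S.map σ) (σ l)
  | l0 T w P S l => simpa [mp] using St.l0 (T.map σ) (σ w) (P.map σ) (S.map σ) (σ l)
  | l1 T w P S l => simpa [mp] using St.l1 (T.map σ) (σ w) (P.map σ) (S.map σ) (σ l)

theorem Rch.map (σ : Equiv.Perm A) {s t : List A × List A} (h : Rch s t) :
    Rch (mp σ s) (mp σ t) := by
  induction h with
  | refl => exact Rch.refl _
  | tail _ h ih => exact Rch.trans ih (Relation.ReflTransGen.single (h.map σ))

/-- the group of renamings on the word level -/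
def HG (s : List A × List A) : Subgroup (Equiv.Perm A) where
  carrier := {σ | Rch s (mp σ s)}
  one_mem' := by simpa [mp_one] using Rch.refl s
  mul_mem' := by
    intro σ τ hσ hτ
    have h := Rch.map σ hτ
    rw [← mp_mul] at h
    exact Rch.trans hσ h
  inv_mem' := by
    intro σ hσ
    have h := (Rch.map σ⁻¹ hσ).symm
    rw [← mp_mul] at h
    simpa [mp_one] using h

theorem mem_HG {s : List A × List A} {σ : Equiv.Perm A} : σ ∈ HG s ↔ Rch s (mp σ s) := Iff.rfl

/-! symbolic words -/

abbrev Tk (k : ℕ) := Fin k ⊕ Fin 3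

inductive Mv
  | r0 | r1 | l0 | l1

def ins {k : ℕ} (w l : Tk k) : List (Tk k) → Option (List (Tk k))
  | [] => none
  | y :: ys => if y = w then some (y :: l :: ys) else (ins w l ys).map (fun r => y :: r)

def rmv {k : ℕ} (t b : List (Tk k)) : Option (List (Tk k)) :=
  match t.reverse, b.reverse with
  | Sum.inl w :: _, l :: bs => ins (Sum.inl w) l bs.reverse
  | _, _ => none

def sstep {k : ℕ} : Mv → List (Tk k) × List (Tk k) → Option (List (Tk k) × List (Tk k))
  | Mv.r0, s => (rmv s.1 s.2).map (fun r => (s.1, r))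
  | Mv.r1, s => (rmv s.2 s.1).map (fun r => (r, s.2))
  | Mv.l0, s => (rmv s.1.reverse s.2.reverse).map (fun r => (s.1, r.reverse))
  | Mv.l1, s => (rmv s.2.reverse s.1.reverse).map (fun r => (r.reverse, s.2))

def srun {k : ℕ} : List Mv → List (Tk k) × List (Tk k) → Option (List (Tk k) × List (Tk k))
  | [], s => some s
  | m :: ms, s => (sstep m s).bind (srun ms)

def itp {k : ℕ} (x : Fin k → A) (U : Fin 3 → List A) (w : List (Tk k)) : List A :=
  w.flatMap (Sum.elim (fun i => [x i]) U)

theorem ins_spec {k : ℕ} (w l : Tk k) : ∀ (b c : List (Tk k)), ins w l b = some c →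
    ∃ P S, b = P ++ w :: S ∧ c = P ++ w :: l :: S := by
  intro b
  induction b with
  | nil => intro c h; simp [ins] at h
  | cons y ys ih =>
    intro c h
    unfold ins at h
    split_ifs at h with hy
    · subst hy
      refine ⟨[], ys, rfl, ?_⟩
      simpa using h.symm
    · rw [Option.map_eq_some_iff] at h
      obtain ⟨r, hr, rfl⟩ := h
      obtain ⟨P, S, rfl, rfl⟩ := ih r hr
      exact ⟨y :: P, S, rfl, rfl⟩

theorem rmv_spec {k : ℕ} (t b c : List (Tk k)) (h : rmv t b = some c) :
    ∃ (T : List (Tk k)) (w : Fin k) (P S : List (Tk k)) (l : Tk k),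
      t = T ++ [Sum.inl w] ∧ b = P ++ Sum.inl w :: (S ++ [l]) ∧ c = P ++ Sum.inl w :: l :: S := by
  unfold rmv at h
  split at h
  · rename_i w t' l bs ht hb
    obtain ⟨P, S, h1, h2⟩ := ins_spec _ _ _ _ h
    refine ⟨t'.reverse, w, P, S, l, ?_, ?_, h2⟩
    · have := congrArg List.reverse ht
      simpa using this
    · have := congrArg List.reverse hb
      simp only [List.reverse_reverse, List.reverse_cons] at this
      rw [this, h1]; simp
  · simp at h

theorem sstep_sound {k : ℕ} (x : Fin k → A) (U V : Fin 3 → List A) (m : Mv)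
    (s s' : List (Tk k) × List (Tk k)) (h : sstep m s = some s') :
    Rch (itp x U s.1, itp x V s.2) (itp x U s'.1, itp x V s'.2) := by
  obtain ⟨t, b⟩ := s
  cases m
  · simp only [sstep, Option.map_eq_some_iff] at h
    obtain ⟨c, hc, rfl⟩ := h
    obtain ⟨T, w, P, S, l, rfl, rfl, rfl⟩ := rmv_spec _ _ _ hc
    have := br0 (itp x U T) (x w) (itp x V P) (itp x V [l]) (itp x V S)
    simpa [itp] using this
  · simp only [sstep, Option.map_eq_some_iff] at h
    obtain ⟨c, hc, rfl⟩ := h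
    obtain ⟨T, w, P, S, l, rfl, rfl, rfl⟩ := rmv_spec _ _ _ hc
    have := br1 (itp x V T) (x w) (itp x U P) (itp x U [l]) (itp x U S)
    simpa [itp] using this
  · simp only [sstep, Option.map_eq_some_iff] at h
    obtain ⟨c, hc, rfl⟩ := h
    obtain ⟨T, w, P, S, l, h1, h2, rfl⟩ := rmv_spec _ _ _ hc
    have h1 := congrArg List.reverse h1
    have h2 := congrArg List.reverse h2
    simp only [List.reverse_reverse] at h1 h2
    subst h1 h2
    have := bl0 (itp x U T.reverse) (x w) (itp x V P.reverse) (itp x V [l]) (itp x V S.reverse)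
    simpa [itp] using this
  · simp only [sstep, Option.map_eq_some_iff] at h
    obtain ⟨c, hc, rfl⟩ := h
    obtain ⟨T, w, P, S, l, h1, h2, rfl⟩ := rmv_spec _ _ _ hc
    have h1 := congrArg List.reverse h1
    have h2 := congrArg List.reverse h2
    simp only [List.reverse_reverse] at h1 h2
    subst h1 h2
    have := bl1 (itp x V T.reverse) (x w) (itp x U P.reverse) (itp x U [l]) (itp x U S.reverse)
    simpa [itp] using this

theorem srun_sound {k : ℕ} (x : Fin k → A) (U V : Fin 3 → List A) : ∀ (ms : List Mv)
    (s s' : List (Tk k) × List (Tk k)), srun ms s = some s' →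
    Rch (itp x U s.1, itp x V s.2) (itp x U s'.1, itp x V s'.2) := by
  intro ms
  induction ms with
  | nil => intro s s' h; simp only [srun, Option.some.injEq] at h; subst h; exact Rch.refl _
  | cons m ms ih =>
    intro s s' h
    simp only [srun, Option.bind_eq_some_iff] at h
    obtain ⟨u, hu, h⟩ := h
    exact Rch.trans (sstep_sound x U V m s u hu) (ih u s' h)

theorem itp_map {k : ℕ} (x : Fin k → A) (U : Fin 3 → List A) (ρ : Equiv.Perm (Fin k))
    (σ : Equiv.Perm A) (hx : ∀ i, σ (x i) = x (ρ i)) (hU : ∀ j, ∀ y ∈ U j, σ y = y)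
    (w : List (Tk k)) : itp x U (w.map (Sum.map ρ id)) = (itp x U w).map σ := by
  induction w with
  | nil => simp [itp]
  | cons y w ih =>
    have e1 : itp x U (y :: w) = (Sum.elim (fun i => [x i]) U y) ++ itp x U w := by simp [itp]
    have e2 : itp x U ((y :: w).map (Sum.map ρ id)) =
      (Sum.elim (fun i => [x i]) U (Sum.map ρ id y)) ++ itp x U (w.map (Sum.map ρ id)) := by
      simp [itp]
    rw [e1, e2, ih, List.map_append]
    congr 1
    cases y with
    | inl i => simp [hx]
    | inr j =>
      simp only [Sum.map_inr, Sum.elim_inr, id]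
      symm
      calc (U j).map σ = (U j).map id := List.map_congr_left (fun y hy => hU j y hy)
        _ = U j := by simp

theorem sym_rch {k : ℕ} (ms : List Mv) (s s' : List (Tk k) × List (Tk k))
    (ρ : Equiv.Perm (Fin k))
    (h : srun ms s = some (s'.1.map (Sum.map ρ id), s'.2.map (Sum.map ρ id)))
    (x : Fin k → A) (U V : Fin 3 → List A) (σ : Equiv.Perm A)
    (hx : ∀ i, σ (x i) = x (ρ i)) (hU : ∀ j, ∀ y ∈ U j, σ y = y) (hV : ∀ j, ∀ y ∈ V j, σ y = y) :
    Rch (itp x U s.1, itp x V s.2) (mp σ (itp x U s'.1, itp x V s'.2)) := by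
  have := srun_sound x U V ms s _ h
  simp only [itp_map x U ρ σ hx hU, itp_map x V ρ σ hx hV] at this
  exact this

variable [Fintype A] [DecidableEq A]

def EqS (ε : ℤˣ) (s s' : List A × List A) : Prop :=
  ∃ σ : Equiv.Perm A, Equiv.Perm.sign σ = ε ∧ Rch s (mp σ s')

theorem EqS.refl (s : List A × List A) : EqS 1 s s := ⟨1, by simp, by simpa [mp_one] using Rch.refl s⟩

theorem EqS.trans {ε ε' : ℤˣ} {s t u : List A × List A} (h : EqS ε s t) (h' : EqS ε' t u) :
    EqS (ε * ε') s u := by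
  obtain ⟨σ, h1, h2⟩ := h
  obtain ⟨τ, h3, h4⟩ := h'
  refine ⟨σ * τ, by simp [h1, h3], ?_⟩
  rw [mp_mul]
  exact Rch.trans h2 (Rch.map σ h4)

theorem EqS.symm {ε : ℤˣ} {s t : List A × List A} (h : EqS ε s t) : EqS ε t s := by
  obtain ⟨σ, h1, h2⟩ := h
  refine ⟨σ⁻¹, by simp [h1], ?_⟩
  have h := (Rch.map σ⁻¹ h2).symm
  rw [← mp_mul] at h
  simpa [mp_one] using h

theorem sym_eqs {k : ℕ} (ms : List Mv) (s s' : List (Tk k) × List (Tk k))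
    (ρ : Equiv.Perm (Fin k)) (x : Fin k → A) (U V : Fin 3 → List A)
    (h : srun ms s = some (s'.1.map (Sum.map ρ id), s'.2.map (Sum.map ρ id)))
    (hx : Function.Injective x) (hU : ∀ j, ∀ i, x i ∉ U j) (hV : ∀ j, ∀ i, x i ∉ V j) :
    EqS (Equiv.Perm.sign ρ) (itp x U s.1, itp x V s.2) (itp x U s'.1, itp x V s'.2) := by
  refine ⟨ρ.viaFintypeEmbedding ⟨x, hx⟩, by simp, ?_⟩
  refine sym_rch ms s s' ρ h x U V _ ?_ ?_ ?_
  · intro i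
    exact Equiv.Perm.viaFintypeEmbedding_apply_image ρ ⟨x, hx⟩ i
  · intro j y hy
    refine Equiv.Perm.viaFintypeEmbedding_apply_notMem_range ρ ⟨x, hx⟩ ?_
    rintro ⟨i, rfl⟩
    exact hU j i hy
  · intro j y hy
    refine Equiv.Perm.viaFintypeEmbedding_apply_notMem_range ρ ⟨x, hx⟩ ?_
    rintro ⟨i, rfl⟩
    exact hV j i hy

end

section
variable {A : Type*}

def tp (l : List (A × A)) : List A := l.flatMap (fun x => [x.1, x.2])
def bt (l : List (A × A)) : List A := l.flatMap (fun x => [x.2, x.1])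

@[simp] theorem tp_nil : tp ([] : List (A × A)) = [] := rfl
@[simp] theorem bt_nil : bt ([] : List (A × A)) = [] := rfl
@[simp] theorem tp_cons (x : A × A) (l : List (A × A)) : tp (x :: l) = x.1 :: x.2 :: tp l := rfl
@[simp] theorem bt_cons (x : A × A) (l : List (A × A)) : bt (x :: l) = x.2 :: x.1 :: bt l := rfl
@[simp] theorem tp_append (l l' : List (A × A)) : tp (l ++ l') = tp l ++ tp l' := by simp [tp]
@[simp] theorem bt_append (l l' : List (A × A)) : bt (l ++ l') = bt l ++ bt l' := by simp [bt]

theorem mem_bt (y : A) (l : List (A × A)) : y ∈ bt l ↔ y ∈ tp l := by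
  induction l with
  | nil => simp
  | cons x l ih => simp [ih]; tauto

abbrev u {k : ℕ} (i : Fin k) : Tk k := Sum.inl i
abbrev v {k : ℕ} (i : Fin 3) : Tk k := Sum.inr i

/-- the main word pair -/
def PW (a d e f z : A) (B G : List (A × A)) : List A × List A :=
  (a :: (tp B ++ d :: e :: f :: (tp G ++ [z])), z :: (bt B ++ f :: e :: d :: (bt G ++ [a])))

def F (a d e f z : A) (B : List (A × A)) : Bool → List (A × A) → List (A × A) → List A × List A
  | true, X, Y => (a :: (tp X ++ (tp Y ++ d :: (tp B ++ [e, f, z]))),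
      z :: (bt X ++ f :: e :: (bt Y ++ d :: (bt B ++ [a]))))
  | false, X, Y => (a :: (tp X ++ (tp Y ++ d :: e :: f :: (tp B ++ [z]))),
      z :: (bt X ++ f :: (bt B ++ e :: (bt Y ++ [d, a]))))

def F' (a d e f z : A) (B : List (A × A)) : Bool → List (A × A) → List (A × A) → List A × List A
  | true, X, Y => (a :: (tp X ++ d :: e :: (tp Y ++ f :: (tp B ++ [z]))),
      z :: (bt X ++ (bt Y ++ f :: (bt B ++ [e, d, a]))))
  | false, X, Y => (a :: (tp X ++ d :: (tp B ++ e :: (tp Y ++ [f, z]))),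
      z :: (bt X ++ (bt Y ++ f :: e :: d :: (bt B ++ [a]))))

/-- nodup hypothesis -/
def Dj (a d e f z : A) (X Y B : List (A × A)) : Prop :=
  (a :: d :: e :: f :: z :: (tp X ++ (tp Y ++ tp B))).Nodup

theorem inj5 {a d e f z : A} {X Y B : List (A × A)} (h : Dj a d e f z X Y B) :
    Function.Injective ![a, d, e, f, z] := by
  rw [← List.nodup_ofFn]
  unfold Dj at h
  have h2 : ([a, d, e, f, z] ++ (tp X ++ (tp Y ++ tp B))).Nodup := by simpa using h
  simpa [List.ofFn_succ] using h2.of_append_left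

theorem av5 {a d e f z : A} {X Y B : List (A × A)} (h : Dj a d e f z X Y B) :
    ∀ j i, ![a, d, e, f, z] i ∉ ![tp X, tp Y, tp B] j := by
  unfold Dj at h
  have h2 : ([a, d, e, f, z] ++ (tp X ++ (tp Y ++ tp B))).Nodup := by simpa using h
  have h3 := List.disjoint_of_nodup_append h2
  intro j i hi
  refine @h3 (![a, d, e, f, z] i) ?_ ?_
  · fin_cases i <;> simp
  · fin_cases j <;> simp at hi <;> simp [hi]

theorem av_bt {k : ℕ} {x : Fin k → A} {X Y B : List (A × A)}
    (h : ∀ j i, x i ∉ ![tp X, tp Y, tp B] j) : ∀ j i, x i ∉ ![bt X, bt Y, bt B] j := by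
  intro j i hi
  refine h j i ?_
  fin_cases j <;> simp [mem_bt] at hi <;> simpa using hi

theorem perm7 {a d e f z : A} {X Y B : List (A × A)} {p q : A}
    (h : Dj a d e f z X ((p, q) :: Y) B) :
    ([a, p, q, d, e, f, z] ++ (tp X ++ (tp Y ++ tp B))).Nodup := by
  unfold Dj at h
  have hp : (a :: d :: e :: f :: z :: (tp X ++ (tp ((p, q) :: Y) ++ tp B))).Perm
    ([a, p, q, d, e, f, z] ++ (tp X ++ (tp Y ++ tp B))) := by
    classical
    rw [List.perm_iff_count]
    intro y
    simp [List.count_cons]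
    ring
  exact hp.nodup_iff.1 h

theorem inj7 {a d e f z : A} {X Y B : List (A × A)} {p q : A}
    (h : Dj a d e f z X ((p, q) :: Y) B) :
    Function.Injective ![a, p, q, d, e, f, z] := by
  rw [← List.nodup_ofFn]
  simpa [List.ofFn_succ] using (perm7 h).of_append_left

theorem av7 {a d e f z : A} {X Y B : List (A × A)} {p q : A}
    (h : Dj a d e f z X ((p, q) :: Y) B) :
    ∀ j i, ![a, p, q, d, e, f, z] i ∉ ![tp X, tp Y, tp B] j := by
  have h3 := List.disjoint_of_nodup_append (perm7 h)
  intro j i hi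
  refine @h3 (![a, p, q, d, e, f, z] i) ?_ ?_
  · fin_cases i <;> simp
  · fin_cases j <;> simp at hi <;> simp [hi]

variable [Fintype A] [DecidableEq A]

theorem s5 {a d e f z : A} {X Y B : List (A × A)} (hD : Dj a d e f z X Y B)
    (ms : List Mv) (s s' : List (Tk 5) × List (Tk 5)) (ρ : Equiv.Perm (Fin 5)) (ε : ℤˣ)
    (hs : Equiv.Perm.sign ρ = ε)
    (h : srun ms s = some (s'.1.map (Sum.map ρ id), s'.2.map (Sum.map ρ id))) :
    EqS ε (itp ![a, d, e, f, z] ![tp X, tp Y, tp B] s.1, itp ![a, d, e, f, z] ![bt X, bt Y, bt B] s.2)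
      (itp ![a, d, e, f, z] ![tp X, tp Y, tp B] s'.1, itp ![a, d, e, f, z] ![bt X, bt Y, bt B] s'.2) := by
  subst hs
  exact sym_eqs ms s s' ρ _ _ _ h (inj5 hD) (av5 hD) (av_bt (av5 hD))

theorem s7 {a d e f z : A} {X Y B : List (A × A)} {p q : A} (hD : Dj a d e f z X ((p, q) :: Y) B)
    (ms : List Mv) (s s' : List (Tk 7) × List (Tk 7)) (ρ : Equiv.Perm (Fin 7)) (ε : ℤˣ)
    (hs : Equiv.Perm.sign ρ = ε)
    (h : srun ms s = some (s'.1.map (Sum.map ρ id), s'.2.map (Sum.map ρ id))) :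
    EqS ε (itp ![a, p, q, d, e, f, z] ![tp X, tp Y, tp B] s.1,
        itp ![a, p, q, d, e, f, z] ![bt X, bt Y, bt B] s.2)
      (itp ![a, p, q, d, e, f, z] ![tp X, tp Y, tp B] s'.1,
        itp ![a, p, q, d, e, f, z] ![bt X, bt Y, bt B] s'.2) := by
  subst hs
  exact sym_eqs ms s s' ρ _ _ _ h (inj7 hD) (av7 hD) (av_bt (av7 hD))

open Mv in
theorem stepP0 {a d e f z : A} {Y B : List (A × A)} (hD : Dj a d e f z [] Y B) :
    EqS (-1) (PW a d e f z B Y) (F a d e f z B true [] Y) := by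
  have := s5 hD [l0, l0, r1, r1]
    ([u 0, v 2, u 1, u 2, u 3, v 1, u 4], [u 4, v 2, u 3, u 2, u 1, v 1, u 0])
    ([u 0, v 1, u 1, v 2, u 2, u 3, u 4], [u 4, u 3, u 2, v 1, u 1, v 2, u 0])
    (List.formPerm [1, 4, 3, 2]) (-1) (by simp [Equiv.Perm.sign_swap]) (by decide)
  simpa [itp, PW, F] using this

open Mv in
theorem stepP0' {a d e f z : A} {Y B : List (A × A)} (hD : Dj a d e f z [] Y B) :
    EqS (-1) (PW a d e f z B Y) (F' a d e f z B true [] Y) := by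
  have := s5 hD [r0, r0, l1, l1]
    ([u 0, v 2, u 1, u 2, u 3, v 1, u 4], [u 4, v 2, u 3, u 2, u 1, v 1, u 0])
    ([u 0, u 1, u 2, v 1, u 3, v 2, u 4], [u 4, v 1, u 3, v 2, u 2, u 1, u 0])
    (List.formPerm [0, 1, 2, 3]) (-1) (by simp [Equiv.Perm.sign_swap]) (by decide)
  simpa [itp, PW, F'] using this

open Mv in
theorem stepL {a d e f z : A} {X B : List (A × A)} (hD : Dj a d e f z X [] B) (c : Bool) :
    EqS (-1) (F a d e f z B c X []) (F' a d e f z X c B []) := by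
  cases c
  · have := s5 hD [l0, l0, r1, r1]
      ([u 0, v 0, u 1, u 2, u 3, v 2, u 4], [u 4, v 0, u 3, v 2, u 2, u 1, u 0])
      ([u 0, v 2, u 1, v 0, u 2, u 3, u 4], [u 4, v 2, u 3, u 2, u 1, v 0, u 0])
      (List.formPerm [1, 4, 3, 2]) (-1) (by simp [Equiv.Perm.sign_swap]) (by decide)
    simpa [itp, F, F'] using this
  · have := s5 hD [r0, r0, l1, l1]
      ([u 0, v 0, u 1, v 2, u 2, u 3, u 4], [u 4, v 0, u 3, u 2, u 1, v 2, u 0])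
      ([u 0, v 2, u 1, u 2, u 3, v 0, u 4], [u 4, v 2, u 3, v 0, u 2, u 1, u 0])
      (List.formPerm [0, 1, 2, 3]) (-1) (by simp [Equiv.Perm.sign_swap]) (by decide)
    simpa [itp, F, F'] using this

open Mv in
theorem stepF {a d e f z : A} {X Y B : List (A × A)} {p q : A}
    (hD : Dj a d e f z X ((p, q) :: Y) B) (c : Bool) :
    EqS 1 (F a d e f z B c X ((p, q) :: Y)) (F a d e f z B (!c) (X ++ [(p, q)]) Y) := by
  cases c
  · have := s7 hD [r0, r1, r1, r0, r0, r0, r1, r1, r0, l1, r1, l1, l0, l0, l1, l1]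
      ([u 0, v 0, u 1, u 2, v 1, u 3, u 4, u 5, v 2, u 6],
        [u 6, v 0, u 5, v 2, u 4, u 2, u 1, v 1, u 3, u 0])
      ([u 0, v 0, u 1, u 2, v 1, u 3, v 2, u 4, u 5, u 6],
        [u 6, v 0, u 2, u 1, u 5, u 4, v 1, u 3, v 2, u 0])
      (List.formPerm [0, 4, 1, 6] * List.formPerm [2, 5]) 1
      (by simp [Equiv.Perm.sign_swap]) (by decide)
    simpa [itp, F] using this
  · have := s7 hD [r0, l1, l1, l0, r0, r1, l1, l0, l0, l1, l1, l0, l1, l0, r1, l1, l1]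
      ([u 0, v 0, u 1, u 2, v 1, u 3, v 2, u 4, u 5, u 6],
        [u 6, v 0, u 5, u 4, u 2, u 1, v 1, u 3, v 2, u 0])
      ([u 0, v 0, u 1, u 2, v 1, u 3, u 4, u 5, v 2, u 6],
        [u 6, v 0, u 2, u 1, u 5, v 2, u 4, v 1, u 3, u 0])
      (List.formPerm [0, 3, 5, 6] * List.formPerm [1, 4]) 1
      (by simp [Equiv.Perm.sign_swap]) (by decide)
    simpa [itp, F] using this

open Mv in
theorem stepF' {a d e f z : A} {X Y B : List (A × A)} {p q : A}
    (hD : Dj a d e f z X ((p, q) :: Y) B) (c : Bool) :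
    EqS 1 (F' a d e f z B c X ((p, q) :: Y)) (F' a d e f z B (!c) (X ++ [(p, q)]) Y) := by
  cases c
  · have := s7 hD [l0, l0, l0, r0, r1, r0, l1, l1, l0, l0, l1, l1, l0, r0, l1, l0]
      ([u 0, v 0, u 3, v 2, u 4, u 1, u 2, v 1, u 5, u 6],
        [u 6, v 0, u 2, u 1, v 1, u 5, u 4, u 3, v 2, u 0])
      ([u 0, v 0, u 1, u 2, u 3, u 4, v 1, u 5, v 2, u 6],
        [u 6, v 0, u 2, u 1, v 1, u 5, v 2, u 4, u 3, u 0])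
      (List.formPerm [2, 4, 6, 5, 3]) 1
      (by simp [Equiv.Perm.sign_swap]) (by decide)
    simpa [itp, F'] using this
  · have := s7 hD [l0, l0, l0, r0, r1, r1, r0, l1, l1, l0, l0, l1, l0, r0, l1, l0, l0]
      ([u 0, v 0, u 3, u 4, u 1, u 2, v 1, u 5, v 2, u 6],
        [u 6, v 0, u 2, u 1, v 1, u 5, v 2, u 4, u 3, u 0])
      ([u 0, v 0, u 1, u 2, u 3, v 2, u 4, v 1, u 5, u 6],
        [u 6, v 0, u 2, u 1, v 1, u 5, u 4, u 3, v 2, u 0])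
      (List.formPerm [2, 4, 6, 5, 3]) 1
      (by simp [Equiv.Perm.sign_swap]) (by decide)
    simpa [itp, F'] using this

theorem chainF {a d e f z : A} {B : List (A × A)} : ∀ (Y X : List (A × A)) (c : Bool),
    Dj a d e f z X Y B →
    EqS 1 (F a d e f z B c X Y) (F a d e f z B (Bool.not^[Y.length] c) (X ++ Y) []) := by
  intro Y
  induction Y with
  | nil => intro X c _; simpa using EqS.refl _
  | cons y Y ih =>
    intro X c h
    obtain ⟨p, q⟩ := y
    have h1 := stepF h c
    have h2 := ih (X ++ [(p, q)]) (!c) (by simpa [Dj] using h)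
    simpa using h1.trans h2

theorem chainF' {a d e f z : A} {B : List (A × A)} : ∀ (Y X : List (A × A)) (c : Bool),
    Dj a d e f z X Y B →
    EqS 1 (F' a d e f z B c X Y) (F' a d e f z B (Bool.not^[Y.length] c) (X ++ Y) []) := by
  intro Y
  induction Y with
  | nil => intro X c _; simpa using EqS.refl _
  | cons y Y ih =>
    intro X c h
    obtain ⟨p, q⟩ := y
    have h1 := stepF' h c
    have h2 := ih (X ++ [(p, q)]) (!c) (by simpa [Dj] using h)
    simpa using h1.trans h2

theorem Dj.rot {a d e f z : A} {B G : List (A × A)} (h : Dj a d e f z [] G B) :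
    Dj a d e f z [] B G := by
  unfold Dj at *
  refine (List.Perm.nodup_iff ?_).1 h
  rw [List.perm_iff_count]
  intro y
  simp [List.count_cons]
  ring

/-- exchanging the blocks, with an odd renaming -/
theorem exch {a d e f z : A} {B G : List (A × A)} (h : Dj a d e f z [] G B)
    (hl : B.length = G.length) : EqS (-1) (PW a d e f z B G) (PW a d e f z G B) := by
  have h1 := stepP0 h
  have h2 := chainF G [] true h
  have h3 := stepL (X := G) (B := B) (by simpa [Dj] using h) (Bool.not^[G.length] true)
  have h4 := (chainF' B [] true h.rot).symm
  have h5 := (stepP0' h.rot).symm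
  rw [List.nil_append] at h2 h4
  rw [hl] at h4
  simpa using (((h1.trans h2).trans h3).trans h4).trans h5

/-- an even permutation exchanging two families of pairs -/
theorem swapBlocks : ∀ (B G : List (A × A)), B.length = G.length → (tp B ++ tp G).Nodup →
    ∃ σ : Equiv.Perm A, Equiv.Perm.sign σ = 1 ∧ B.map (Prod.map σ σ) = G ∧
      G.map (Prod.map σ σ) = B ∧ ∀ y, y ∉ tp B → y ∉ tp G → σ y = y := by
  intro B
  induction B with
  | nil => 
    intro G hl _
    have : G = [] := by simpa using hl.symm
    subst this
    exact ⟨1, by simp, rfl, rfl, by simp⟩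
  | cons x B ih =>
    intro G hl hN
    cases G with
    | nil => simp at hl
    | cons y G =>
      obtain ⟨p, q⟩ := x
      obtain ⟨p', q'⟩ := y
      have hP : (tp ((p, q) :: B) ++ tp ((p', q') :: G)).Perm
          (([p, q, p', q'] ++ (tp B ++ tp G))) := by
        rw [List.perm_iff_count]
        intro y
        simp [List.count_cons]
        ring
      have hN := hP.nodup_iff.1 hN
      obtain ⟨σ, hs, hB, hG, hf⟩ := ih G (by simpa using hl) hN.of_append_right
      have hdis := List.disjoint_of_nodup_append hN
      have h4 := hN.of_append_left
      have hav : ∀ y ∈ [p, q, p', q'], y ∉ tp B ∧ y ∉ tp G := by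
        intro y hy
        have := hdis hy
        simpa using this
      have hp := hav p (by simp)
      have hq := hav q (by simp)
      have hp' := hav p' (by simp)
      have hq' := hav q' (by simp)
      have fp := hf p hp.1 hp.2
      have fq := hf q hq.1 hq.2
      have fp' := hf p' hp'.1 hp'.2
      have fq' := hf q' hq'.1 hq'.2
      simp at h4
      have key : ∀ y, y ∈ tp B ∨ y ∈ tp G → swap p p' (swap q q' y) = y := by
        intro y hy
        have n1 : y ≠ p := by rintro rfl; tauto
        have n2 : y ≠ q := by rintro rfl; tauto
        have n3 : y ≠ p' := by rintro rfl; tauto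
        have n4 : y ≠ q' := by rintro rfl; tauto
        rw [Equiv.swap_apply_of_ne_of_ne n2 n4, Equiv.swap_apply_of_ne_of_ne n1 n3]
      have mm : ∀ (B : List (A × A)) x, x ∈ B → x.1 ∈ tp B ∧ x.2 ∈ tp B := by
        intro B x hx
        constructor <;> exact List.mem_flatMap.2 ⟨x, hx, by simp⟩
      refine ⟨swap p p' * swap q q' * σ, ?_, ?_, ?_, ?_⟩
      · have : p ≠ p' := by tauto
        have : q ≠ q' := by tauto
        simp [Equiv.Perm.sign_swap, *]
      · rw [List.map_cons]
        congr 1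
        · simp [fp, fq]
          grind [Equiv.swap_apply_def]
        · refine Eq.trans (List.map_congr_left ?_) hB
          intro x hx
          have hx' : Prod.map σ σ x ∈ G := by rw [← hB]; exact List.mem_map_of_mem hx
          have := mm G _ hx'
          ext
          · simpa using key (σ x.1) (Or.inr this.1)
          · simpa using key (σ x.2) (Or.inr this.2)
      · rw [List.map_cons]
        congr 1
        · simp [fp', fq']
          grind [Equiv.swap_apply_def]
        · refine Eq.trans (List.map_congr_left ?_) hG
          intro x hx
          have hx' : Prod.map σ σ x ∈ B := by rw [← hG]; exact List.mem_map_of_mem hx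
          have := mm B _ hx'
          ext
          · simpa using key (σ x.1) (Or.inl this.1)
          · simpa using key (σ x.2) (Or.inl this.2)
      · intro y h1 h2
        simp at h1 h2
        have : σ y = y := hf y (by tauto) (by tauto)
        simp [this]
        rw [Equiv.swap_apply_of_ne_of_ne (a := q) (by tauto) (by tauto),
          Equiv.swap_apply_of_ne_of_ne (by tauto) (by tauto)]

theorem map_tp (σ : Equiv.Perm A) (B : List (A × A)) : (tp B).map σ = tp (B.map (Prod.map σ σ)) := by
  induction B with
  | nil => simp
  | cons x B ih => simp [ih]

theorem map_bt (σ : Equiv.Perm A) (B : List (A × A)) : (bt B).map σ = bt (B.map (Prod.map σ σ)) := by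
  induction B with
  | nil => simp
  | cons x B ih => simp [ih]

theorem odd_mem {a d e f z : A} {B G : List (A × A)} (h : Dj a d e f z [] G B)
    (hl : B.length = G.length) :
    ∃ σ ∈ HG (PW a d e f z B G), Equiv.Perm.sign σ = -1 := by
  obtain ⟨τ, hτ, hr⟩ := exch h hl
  have hr' := h.rot
  have hN : ([a, d, e, f, z] ++ (tp B ++ tp G)).Nodup := by simpa [Dj] using hr'
  obtain ⟨σ, hs, hB, hG, hf⟩ := swapBlocks B G hl hN.of_append_right
  have hdis := List.disjoint_of_nodup_append hN
  have hav : ∀ y ∈ [a, d, e, f, z], σ y = y := by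
    intro y hy
    have := hdis hy
    exact hf y (by simp at this; tauto) (by simp at this; tauto)
  have e1 : PW a d e f z G B = mp σ (PW a d e f z B G) := by
    have ha := hav a (by simp)
    have hd := hav d (by simp)
    have he := hav e (by simp)
    have hf := hav f (by simp)
    have hz := hav z (by simp)
    simp [mp, PW, map_tp, map_bt, hB, hG, ha, hd, he, hf, hz]
  rw [e1, ← mp_mul] at hr
  exact ⟨τ * σ, hr, by simp [hs, hτ]⟩

end

section
variable {A : Type*} [DecidableEq A]

theorem swap_vec {k : ℕ} {x : Fin k → A} (hx : Function.Injective x) (i j l : Fin k) :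
    swap (x i) (x j) (x l) = x (swap i j l) := hx.swap_apply i j l

open Mv in
theorem three {a p q z : A} {X Y X' Y' : List A}
    (h : (a :: (X ++ p :: q :: (Y ++ [z]))).Nodup)
    (h' : (z :: (X' ++ q :: p :: (Y' ++ [a]))).Nodup) :
    swap a p * swap a z ∈ HG (a :: (X ++ p :: q :: (Y ++ [z])), z :: (X' ++ q :: p :: (Y' ++ [a]))) ∧
    swap a q * swap a z ∈ HG (a :: (X ++ p :: q :: (Y ++ [z])), z :: (X' ++ q :: p :: (Y' ++ [a]))) := by
  have hP : (a :: (X ++ p :: q :: (Y ++ [z]))).Perm ([a, p, q, z] ++ (X ++ Y)) := by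
    rw [List.perm_iff_count]
    intro y
    simp [List.count_cons]
    ring
  have hP' : (z :: (X' ++ q :: p :: (Y' ++ [a]))).Perm ([a, p, q, z] ++ (X' ++ Y')) := by
    rw [List.perm_iff_count]
    intro y
    simp [List.count_cons]
    ring
  have h := hP.nodup_iff.1 h
  have h' := hP'.nodup_iff.1 h'
  have hx : Function.Injective ![a, p, q, z] := by
    rw [← List.nodup_ofFn]
    simpa [List.ofFn_succ] using h.of_append_left
  have hd := List.disjoint_of_nodup_append h
  have hd' := List.disjoint_of_nodup_append h'
  have hU : ∀ y, (∃ j, y ∈ ![X, Y, []] j) → y ≠ a ∧ y ≠ p ∧ y ≠ q ∧ y ≠ z := by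
    rintro y ⟨j, hj⟩
    have hy : y ∈ X ++ Y := by
      fin_cases j <;> simp at hj <;> simp [hj]
    have : y ∉ [a, p, q, z] := fun h => hd h hy
    simpa using this
  have hV : ∀ y, (∃ j, y ∈ ![X', Y', []] j) → y ≠ a ∧ y ≠ p ∧ y ≠ q ∧ y ≠ z := by
    rintro y ⟨j, hj⟩
    have hy : y ∈ X' ++ Y' := by
      fin_cases j <;> simp at hj <;> simp [hj]
    have : y ∉ [a, p, q, z] := fun h => hd' h hy
    simpa using this
  have key : ∀ y t, t = p ∨ t = q → (y ≠ a ∧ y ≠ p ∧ y ≠ q ∧ y ≠ z) →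
      (swap a t * swap a z) y = y := by
    intro y t ht hy
    rw [Equiv.Perm.mul_apply, Equiv.swap_apply_of_ne_of_ne hy.1 hy.2.2.2,
      Equiv.swap_apply_of_ne_of_ne hy.1 (by rcases ht with rfl | rfl <;> tauto)]
  constructor
  · have := sym_rch [l0, l0, l0, r1, l1, r1, r1, r0, r0, r0]
      ([u 0, v 0, u 1, u 2, v 1, u 3], [u 3, v 0, u 2, u 1, v 1, u 0])
      ([u 0, v 0, u 1, u 2, v 1, u 3], [u 3, v 0, u 2, u 1, v 1, u 0])
      (swap 0 1 * swap 0 3) (by decide) ![a, p, q, z] ![X, Y, []] ![X', Y', []]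
      (swap a p * swap a z)
      (fun i => by
        have := swap_vec hx 0 3 i
        have h2 := swap_vec hx 0 1 (swap 0 3 i)
        rw [Equiv.Perm.mul_apply, Equiv.Perm.mul_apply, ← h2, ← this]; rfl)
      (fun j y hy => key y p (by simp) (hU y ⟨j, hy⟩))
      (fun j y hy => key y p (by simp) (hV y ⟨j, hy⟩))
    rw [mem_HG]
    simpa [itp] using this
  · have := sym_rch [l0, l0, r1, l1, r1, r0, r0]
      ([u 0, v 0, u 1, u 2, v 1, u 3], [u 3, v 0, u 2, u 1, v 1, u 0])
      ([u 0, v 0, u 1, u 2, v 1, u 3], [u 3, v 0, u 2, u 1, v 1, u 0])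
      (swap 0 2 * swap 0 3) (by decide) ![a, p, q, z] ![X, Y, []] ![X', Y', []]
      (swap a q * swap a z)
      (fun i => by
        have := swap_vec hx 0 3 i
        have h2 := swap_vec hx 0 2 (swap 0 3 i)
        rw [Equiv.Perm.mul_apply, Equiv.Perm.mul_apply, ← h2, ← this]; rfl)
      (fun j y hy => key y q (by simp) (hU y ⟨j, hy⟩))
      (fun j y hy => key y q (by simp) (hV y ⟨j, hy⟩))
    rw [mem_HG]
    simpa [itp] using this

theorem three_pair {a d e f z : A} {B G : List (A × A)}
    (h : (PW a d e f z B G).1.Nodup) (h' : (PW a d e f z B G).2.Nodup) (t : A)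
    (ht : t ∈ (PW a d e f z B G).1) (hta : t ≠ a) :
    swap a t * swap a z ∈ HG (PW a d e f z B G) := by
  have pick : ∀ (C : List (A × A)), t ∈ tp C → ∃ C1 x C2, C = C1 ++ x :: C2 ∧ (t = x.1 ∨ t = x.2) := by
    intro C hC
    obtain ⟨x, hx, hx'⟩ := List.mem_flatMap.1 hC
    obtain ⟨C1, C2, rfl⟩ := List.append_of_mem hx
    exact ⟨C1, x, C2, rfl, by simpa using hx'⟩
  by_cases htz : t = z
  · subst htz
    simp
  have hc : t ∈ tp B ∨ t ∈ tp G ∨ t = d ∨ t = e ∨ t = f := by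
    simp [PW] at ht
    tauto
  rcases hc with hB | hG | h3
  · obtain ⟨C1, ⟨p, q⟩, C2, rfl, hh⟩ := pick _ hB
    have := three (a := a) (p := p) (q := q) (z := z) (X := tp C1)
      (Y := tp C2 ++ d :: e :: f :: tp G) (X' := bt C1) (Y' := bt C2 ++ f :: e :: d :: bt G)
      (by simpa [PW] using h) (by simpa [PW] using h')
    rcases hh with rfl | rfl
    · simpa [PW] using this.1
    · simpa [PW] using this.2
  · obtain ⟨C1, ⟨p, q⟩, C2, rfl, hh⟩ := pick _ hG
    have := three (a := a) (p := p) (q := q) (z := z) (X := tp B ++ d :: e :: f :: tp C1)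
      (Y := tp C2) (X' := bt B ++ f :: e :: d :: bt C1) (Y' := bt C2)
      (by simpa [PW] using h) (by simpa [PW] using h')
    rcases hh with rfl | rfl
    · simpa [PW] using this.1
    · simpa [PW] using this.2
  · have h1 := three (a := a) (p := d) (q := e) (z := z) (X := tp B)
      (Y := f :: tp G) (X' := bt B ++ [f]) (Y' := bt G)
      (by simpa [PW] using h) (by simpa [PW] using h')
    have h2 := three (a := a) (p := e) (q := f) (z := z) (X := tp B ++ [d])
      (Y := tp G) (X' := bt B) (Y' := d :: bt G)
      (by simpa [PW] using h) (by simpa [PW] using h')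
    rcases h3 with rfl | rfl | rfl
    · simpa [PW] using h1.1
    · simpa [PW] using h1.2
    · simpa [PW] using h2.2

theorem gen [Fintype A] (H : Subgroup (Equiv.Perm A)) (a z : A) (haz : a ≠ z)
    (h : ∀ t, t ≠ a → swap a t * swap a z ∈ H) (σ : Equiv.Perm A) :
    (Equiv.Perm.sign σ = 1 ∧ σ ∈ H) ∨ (Equiv.Perm.sign σ = -1 ∧ swap a z * σ ∈ H) := by
  have star : ∀ t, t ≠ a → ∀ τ : Equiv.Perm A,
      ((Equiv.Perm.sign τ = 1 ∧ τ ∈ H) ∨ (Equiv.Perm.sign τ = -1 ∧ swap a z * τ ∈ H)) →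
      ((Equiv.Perm.sign (swap a t * τ) = 1 ∧ swap a t * τ ∈ H) ∨
        (Equiv.Perm.sign (swap a t * τ) = -1 ∧ swap a z * (swap a t * τ) ∈ H)) := by
    intro t ht τ hτ
    have hs : Equiv.Perm.sign (swap a t) = -1 := Equiv.Perm.sign_swap (Ne.symm ht)
    rcases hτ with ⟨h1, h2⟩ | ⟨h1, h2⟩
    · right
      refine ⟨by rw [Equiv.Perm.sign_mul, hs, h1]; rfl, ?_⟩
      have h3 := H.mul_mem (H.inv_mem (h t ht)) h2
      simpa [mul_assoc] using h3
    · left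
      refine ⟨by rw [Equiv.Perm.sign_mul, hs, h1]; rfl, ?_⟩
      have h3 := H.mul_mem (h t ht) h2
      simpa [mul_assoc] using h3
  induction σ using Equiv.Perm.swap_induction_on with
  | one => left; simp
  | swap_mul τ x y hxy ih =>
    by_cases hx : x = a
    · subst hx
      exact star y (Ne.symm hxy) τ ih
    by_cases hy : y = a
    · subst hy
      rw [Equiv.swap_comm]
      exact star x hxy τ ih
    have e1 : swap x y = swap a x * (swap a y * swap a x) := by
      have := Equiv.swap_mul_swap_mul_swap (x := y) (y := a) (z := x) hy (Ne.symm hxy)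
      rw [← this, Equiv.swap_comm y a, mul_assoc]
    rw [e1]
    have := star x hx _ (star y hy _ (star x hx τ ih))
    simpa [mul_assoc] using this

end

section
variable {A : Type*} [Fintype A]

def E (φ : A ≃ Fin (Fintype.card A)) (l : List A) : Prop :=
  l.map (fun x => (φ x : ℕ)) = List.range (Fintype.card A)

theorem E.pos {φ : A ≃ Fin (Fintype.card A)} {L R : List A} {x : A} (h : E φ (L ++ x :: R)) :
    (φ x : ℕ) = L.length := by
  unfold E at h
  have h1 := congrArg (fun l => l[L.length]?) h
  have h2 := congrArg List.length h
  simp at h1 h2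
  rw [List.getElem?_range (by omega)] at h1
  simpa using h1

theorem E.len {φ : A ≃ Fin (Fintype.card A)} {l : List A} (h : E φ l) :
    l.length = Fintype.card A := by
  have h2 := congrArg List.length h
  simpa using h2

theorem E.nodup {φ : A ≃ Fin (Fintype.card A)} {l : List A} (h : E φ l) : l.Nodup := by
  have : (l.map (fun x => (φ x : ℕ))).Nodup := by rw [h]; exact List.nodup_range
  exact List.Nodup.of_map _ this

theorem E.mem {φ : A ≃ Fin (Fintype.card A)} {l : List A} (h : E φ l) (x : A) : x ∈ l := by
  have : (φ x : ℕ) ∈ l.map (fun x => (φ x : ℕ)) := by rw [h]; simp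
  obtain ⟨y, hy, hxy⟩ := List.mem_map.1 this
  have : y = x := φ.injective (Fin.ext hxy)
  exact this ▸ hy

theorem E.unique {φ ψ : A ≃ Fin (Fintype.card A)} {l : List A} (h : E φ l) (h' : E ψ l) :
    φ = ψ := by
  ext x
  obtain ⟨L, R, rfl⟩ := List.append_of_mem (h.mem x)
  rw [h.pos, h'.pos]

theorem E.ex {φ : A ≃ Fin (Fintype.card A)} {l l' : List A} (h : E φ l) (hp : l.Perm l') :
    ∃ ψ : A ≃ Fin (Fintype.card A), E ψ l' := by
  classical
  have hn : l'.Nodup := hp.nodup_iff.1 h.nodup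
  have hm : ∀ x, x ∈ l' := fun x => hp.mem_iff.1 (h.mem x)
  have hl : l'.length = Fintype.card A := by rw [← hp.length_eq, h.len]
  refine ⟨(hn.getEquivOfForallMemList l' hm).symm.trans (finCongr hl), ?_⟩
  unfold E
  apply List.ext_getElem
  · simp [hl]
  · intro i h1 h2
    simp [List.Nodup.getEquivOfForallMemList]
    exact hn.idxOf_getElem i (by simpa using h1)

theorem E.last {φ : A ≃ Fin (Fintype.card A)} {T : List A} {w : A} (h : E φ (T ++ [w])) (x : A) :
    φ x ≤ φ w := by
  have h1 := h.pos
  have h2 := h.len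
  have h3 := (φ x).isLt
  rw [Fin.le_def]
  simp at h2
  omega

theorem E.first {φ : A ≃ Fin (Fintype.card A)} {T : List A} {w : A} (h : E φ (w :: T)) (x : A) :
    φ w ≤ φ x := by
  have h1 := E.pos (L := []) h
  rw [Fin.le_def]
  simp at h1
  omega

theorem E.right {φ ψ : A ≃ Fin (Fintype.card A)} {P S : List A} {w l : A}
    (h : E φ (P ++ w :: (S ++ [l]))) (h' : E ψ (P ++ w :: l :: S)) :
    (∀ x, φ x ≤ φ l) ∧ (∀ b, φ b ≤ φ w → ψ b = φ b) ∧ ((ψ l : ℕ) = (φ w : ℕ) + 1) ∧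
      (∀ b, ¬ φ b ≤ φ w → b ≠ l → (ψ b : ℕ) = (φ b : ℕ) + 1) := by
  have hw := h.pos
  have hw' := h'.pos
  have hl : (φ l : ℕ) = (P ++ w :: S).length := E.pos (R := []) (by simpa using h)
  have hl' : (ψ l : ℕ) = (P ++ [w]).length := E.pos (R := S) (by simpa using h')
  simp at hl hl'
  have hP : ∀ b ∈ P, (φ b : ℕ) = ψ b ∧ (φ b : ℕ) < P.length := by
    intro b hb
    obtain ⟨L, R, rfl⟩ := List.append_of_mem hb
    have h1 : (φ b : ℕ) = L.length := E.pos (R := R ++ w :: (S ++ [l])) (by simpa using h)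
    have h2 : (ψ b : ℕ) = L.length := E.pos (R := R ++ w :: l :: S) (by simpa using h')
    simp
    omega
  have hS : ∀ b ∈ S, (ψ b : ℕ) = φ b + 1 ∧ P.length < (φ b : ℕ) := by
    intro b hb
    obtain ⟨L, R, rfl⟩ := List.append_of_mem hb
    have h1 : (φ b : ℕ) = (P ++ w :: L).length := E.pos (R := R ++ [l]) (by simpa using h)
    have h2 : (ψ b : ℕ) = (P ++ w :: l :: L).length := E.pos (R := R) (by simpa using h')
    simp at h1 h2
    omega
  have hm : ∀ b, b ∈ P ∨ b = w ∨ b ∈ S ∨ b = l := by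
    intro b
    have := h.mem b
    simpa using this
  refine ⟨E.last (T := P ++ w :: S) (by simpa using h), ?_, by omega, ?_⟩
  · intro b hb
    rw [Fin.le_def] at hb
    apply Fin.ext
    rcases hm b with h1 | rfl | h1 | rfl
    · exact (hP b h1).1.symm
    · omega
    · have := hS b h1; omega
    · omega
  · intro b hb hbl
    rw [Fin.le_def] at hb
    rcases hm b with h1 | rfl | h1 | rfl
    · have := hP b h1; omega
    · omega
    · exact (hS b h1).1
    · exact absurd rfl hbl

theorem E.left {φ ψ : A ≃ Fin (Fintype.card A)} {P S : List A} {w l : A}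
    (h : E φ (l :: (S ++ w :: P))) (h' : E ψ (S ++ l :: w :: P)) :
    (∀ x, φ l ≤ φ x) ∧ (∀ b, φ w ≤ φ b → ψ b = φ b) ∧ ((ψ l : ℕ) = (φ w : ℕ) - 1) ∧
      (∀ b, ¬ φ w ≤ φ b → b ≠ l → (ψ b : ℕ) = (φ b : ℕ) - 1) := by
  have hw : (φ w : ℕ) = (l :: S).length := E.pos (R := P) (by simpa using h)
  have hw' : (ψ w : ℕ) = (S ++ [l]).length := E.pos (R := P) (by simpa using h')
  have hl : (φ l : ℕ) = ([] : List A).length := E.pos (L := []) h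
  have hl' := h'.pos
  simp at hl hw hw'
  have hP : ∀ b ∈ P, (φ b : ℕ) = ψ b ∧ S.length < (φ b : ℕ) := by
    intro b hb
    obtain ⟨L, R, rfl⟩ := List.append_of_mem hb
    have h1 : (φ b : ℕ) = (l :: (S ++ w :: L)).length := E.pos (R := R) (by simpa using h)
    have h2 : (ψ b : ℕ) = (S ++ l :: w :: L).length := E.pos (R := R) (by simpa using h')
    simp at h1 h2
    omega
  have hS : ∀ b ∈ S, (φ b : ℕ) = ψ b + 1 ∧ (φ b : ℕ) ≤ S.length := by
    intro b hb
    obtain ⟨L, R, rfl⟩ := List.append_of_mem hb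
    have h1 : (φ b : ℕ) = (l :: L).length := E.pos (R := R ++ w :: P) (by simpa using h)
    have h2 : (ψ b : ℕ) = L.length := E.pos (R := R ++ l :: w :: P) (by simpa using h')
    simp at h1 h2
    simp
    omega
  have hm : ∀ b, b = l ∨ b ∈ S ∨ b = w ∨ b ∈ P := by
    intro b
    have := h.mem b
    simpa using this
  refine ⟨E.first h, ?_, by omega, ?_⟩
  · intro b hb
    rw [Fin.le_def] at hb
    apply Fin.ext
    rcases hm b with rfl | h1 | rfl | h1
    · omega
    · have := hS b h1; omega
    · omega
    · exact (hP b h1).1.symm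
  · intro b hb hbl
    rw [Fin.le_def] at hb
    rcases hm b with rfl | h1 | rfl | h1
    · exact absurd rfl hbl
    · have := hS b h1; omega
    · omega
    · have := hP b h1; omega

def Enc (ρ : RPair A) (s : List A × List A) : Prop := E (ρ false) s.1 ∧ E (ρ true) s.2

theorem permR (P S : List A) (w l : A) : (P ++ w :: (S ++ [l])).Perm (P ++ w :: l :: S) := by
  classical
  rw [List.perm_iff_count]
  intro y
  simp [List.count_cons]

theorem permL (P S : List A) (w l : A) : (l :: (S ++ w :: P)).Perm (S ++ l :: w :: P) := by
  classical
  rw [List.perm_iff_count]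
  intro y
  simp [List.count_cons]
  ring

theorem bridge {s s' : List A × List A} (hst : St s s') (ρ : RPair A) (h : Enc ρ s) :
    ∃ ρ' : RPair A, Enc ρ' s' ∧ (RightMove ρ ρ' ∨ LeftMove ρ ρ') := by
  obtain ⟨h0, h1⟩ := h
  cases hst with
  | r0 T w P S l =>
    obtain ⟨ψ, hψ⟩ := E.ex h1 (permR P S w l)
    have := E.right h1 hψ
    exact ⟨fun ε => cond ε ψ (ρ false), ⟨h0, hψ⟩, Or.inl ⟨false, w, l, E.last h0, this.1, rfl,
      this.2.1, this.2.2.1, this.2.2.2⟩⟩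
  | r1 T w P S l =>
    obtain ⟨ψ, hψ⟩ := E.ex h0 (permR P S w l)
    have := E.right h0 hψ
    exact ⟨fun ε => cond ε (ρ true) ψ, ⟨hψ, h1⟩, Or.inl ⟨true, w, l, E.last h1, this.1, rfl,
      this.2.1, this.2.2.1, this.2.2.2⟩⟩
  | l0 T w P S l =>
    obtain ⟨ψ, hψ⟩ := E.ex h1 (permL P S w l)
    have := E.left h1 hψ
    exact ⟨fun ε => cond ε ψ (ρ false), ⟨h0, hψ⟩, Or.inr ⟨false, w, l, E.first h0, this.1, rfl,
      this.2.1, this.2.2.1, this.2.2.2⟩⟩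
  | l1 T w P S l =>
    obtain ⟨ψ, hψ⟩ := E.ex h0 (permL P S w l)
    have := E.left h0 hψ
    exact ⟨fun ε => cond ε (ρ true) ψ, ⟨hψ, h1⟩, Or.inr ⟨true, w, l, E.first h1, this.1, rfl,
      this.2.1, this.2.2.1, this.2.2.2⟩⟩

theorem bridge_rch {s s' : List A × List A} (hst : Rch s s') (ρ : RPair A) (h : Enc ρ s) :
    ∃ ρ' : RPair A, Enc ρ' s' ∧ ρ' ∈ EClass ρ := by
  induction hst with
  | refl => exact ⟨ρ, h, Relation.ReflTransGen.refl⟩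
  | tail _ h2 ih =>
    obtain ⟨ρ1, e1, m1⟩ := ih
    obtain ⟨ρ2, e2, m2⟩ := bridge h2 ρ1 e1
    exact ⟨ρ2, e2, Relation.ReflTransGen.tail m1 m2⟩

theorem Enc.rename {ρ : RPair A} {s : List A × List A} (h : Enc ρ s) (σ : Equiv.Perm A) :
    Enc (pairRename ρ σ⁻¹) (mp σ s) := by
  obtain ⟨h0, h1⟩ := h
  unfold E at h0 h1
  constructor
  · simpa [E, pairRename, mp, Function.comp_def] using h0
  · simpa [E, pairRename, mp, Function.comp_def] using h1

theorem mem_ren {ρ : RPair A} {s : List A × List A} (h : Enc ρ s) {σ : Equiv.Perm A}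
    (hσ : σ ∈ HG s) : σ ∈ renamings ρ := by
  have h1 : Rch s (mp σ⁻¹ s) := (HG s).inv_mem hσ
  obtain ⟨ρ', e1, m1⟩ := bridge_rch h1 ρ h
  have e2 := h.rename σ⁻¹
  rw [inv_inv] at e2
  have : pairRename ρ σ = ρ' := by
    funext ε
    cases ε
    · exact E.unique e2.1 e1.1
    · exact E.unique e2.2 e1.2
  show pairRename ρ σ ∈ EClass ρ
  rw [this]
  exact m1

theorem tp_range (φ : A → ℕ) : ∀ (k s : ℕ) (b c : Fin k → A), (∀ i, φ (b i) = s + 2 * (i : ℕ)) →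
    (∀ i, φ (c i) = s + 2 * (i : ℕ) + 1) →
    (tp (List.ofFn (fun i => (b i, c i)))).map φ = List.range' s (2 * k) := by
  intro k
  induction k with
  | zero => intro s b c _ _; simp
  | succ k ih =>
    intro s b c hb hc
    have := ih (s + 2) (fun i => b i.succ) (fun i => c i.succ)
      (fun i => by rw [hb]; simp; ring) (fun i => by rw [hc]; simp; ring)
    rw [List.ofFn_succ, tp_cons, show 2 * (k + 1) = 2 * k + 1 + 1 by ring, List.range'_succ,
      List.range'_succ, List.map_cons, List.map_cons, this, hb, hc]
    simp

theorem bt_ofFn {k : ℕ} (b c : Fin k → A) :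
    bt (List.ofFn (fun i => (b i, c i))) = tp (List.ofFn (fun i => (c i, b i))) := by
  induction k with
  | zero => simp
  | succ k ih => simp [List.ofFn_succ, ih]

theorem E_of (φ : A ≃ Fin (Fintype.card A)) (m n : ℕ) (a d e f z : A) (b c : Fin m → A)
    (g h : Fin n → A) (hcard : Fintype.card A = 2 * m + 2 * n + 5)
    (h0a : (φ a : ℕ) = 0)
    (h0b : ∀ i : Fin m, (φ (b i) : ℕ) = 2 * (i : ℕ) + 1)
    (h0c : ∀ i : Fin m, (φ (c i) : ℕ) = 2 * (i : ℕ) + 2)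
    (h0d : (φ d : ℕ) = 2 * m + 1)
    (h0e : (φ e : ℕ) = 2 * m + 2)
    (h0f : (φ f : ℕ) = 2 * m + 3)
    (h0g : ∀ j : Fin n, (φ (g j) : ℕ) = 2 * m + 4 + 2 * (j : ℕ))
    (h0h : ∀ j : Fin n, (φ (h j) : ℕ) = 2 * m + 5 + 2 * (j : ℕ))
    (h0z : (φ z : ℕ) = 2 * m + 2 * n + 4) :
    E φ (a :: (tp (List.ofFn (fun i => (b i, c i))) ++ d :: e :: f ::
      (tp (List.ofFn (fun i => (g i, h i))) ++ [z]))) := by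
  unfold E
  have h1 := tp_range (fun x => (φ x : ℕ)) m 1 b c (fun i => by rw [h0b]; ring)
    (fun i => by rw [h0c]; ring)
  have h2 := tp_range (fun x => (φ x : ℕ)) n (2 * m + 4) g h (fun i => by rw [h0g])
    (fun i => by rw [h0h]; ring)
  simp only [List.map_cons, List.map_append, h1, h2, h0a, h0d, h0e, h0f, h0z, List.map_nil]
  rw [List.range_eq_range', hcard, show 2 * m + 2 * n + 5 = (2 * m + (2 * n + 1 + 1 + 1 + 1)) + 1 by ring,
    List.range'_succ, ← List.range'_append, List.range'_succ, List.range'_succ, List.range'_succ,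
    ← List.range'_append]
  rw [show 0 + 1 + 1 * (2 * m) = 2 * m + 1 by ring,
    show 2 * m + 1 + 1 + 1 + 1 + 1 * (2 * n) = 2 * m + 2 * n + 4 by ring]
  simp

end
end RZ

/-- for `A = {a, b₁,…,b_m, c₁,…,c_m, d, e, f, g₁,…,g_n, h₁,…,h_n, z}`
(2m+2n+5 distinct letters) with
`π₀ : a b₁ c₁ … b_m c_m d e f g₁ h₁ … g_n h_n z` and
`π₁ : z c₁ b₁ … c_m b_m f e d h₁ g₁ … h_n g_n a`
(positions written 0-indexed; `b i` denotes `b_{i+1}` etc.),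
`π` is irreducible and `Alt(A) ⊆ G(π)`; if `m = n` then `G(π) = Sym(A)`. -/
theorem stmt12 {A : Type*} [Fintype A] [DecidableEq A] [Nonempty A]
    (m n : ℕ) (a d e f z : A) (b c : Fin m → A) (g h : Fin n → A)
    (hcard : Fintype.card A = 2 * m + 2 * n + 5)
    (π : RPair A)
    (h0a : (π false a : ℕ) = 0)
    (h0b : ∀ i : Fin m, (π false (b i) : ℕ) = 2 * (i : ℕ) + 1)
    (h0c : ∀ i : Fin m, (π false (c i) : ℕ) = 2 * (i : ℕ) + 2)
    (h0d : (π false d : ℕ) = 2 * m + 1)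
    (h0e : (π false e : ℕ) = 2 * m + 2)
    (h0f : (π false f : ℕ) = 2 * m + 3)
    (h0g : ∀ j : Fin n, (π false (g j) : ℕ) = 2 * m + 4 + 2 * (j : ℕ))
    (h0h : ∀ j : Fin n, (π false (h j) : ℕ) = 2 * m + 5 + 2 * (j : ℕ))
    (h0z : (π false z : ℕ) = 2 * m + 2 * n + 4)
    (h1z : (π true z : ℕ) = 0)
    (h1c : ∀ i : Fin m, (π true (c i) : ℕ) = 2 * (i : ℕ) + 1)
    (h1b : ∀ i : Fin m, (π true (b i) : ℕ) = 2 * (i : ℕ) + 2)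
    (h1f : (π true f : ℕ) = 2 * m + 1)
    (h1e : (π true e : ℕ) = 2 * m + 2)
    (h1d : (π true d : ℕ) = 2 * m + 3)
    (h1h : ∀ j : Fin n, (π true (h j) : ℕ) = 2 * m + 4 + 2 * (j : ℕ))
    (h1g : ∀ j : Fin n, (π true (g j) : ℕ) = 2 * m + 5 + 2 * (j : ℕ))
    (h1a : (π true a : ℕ) = 2 * m + 2 * n + 4) :
    PairIrreducible π ∧
      (alternatingGroup A : Set (Equiv.Perm A)) ⊆ renamings π ∧
      (m = n → renamings π = Set.univ) := by
  have hE0 := RZ.E_of (π false) m n a d e f z b c g h hcard h0a h0b h0c h0d h0e h0f h0g h0h h0z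
  have hE1 := RZ.E_of (π true) m n z f e d a c b h g hcard h1z h1c h1b h1f h1e h1d h1h h1g h1a
  rw [← RZ.bt_ofFn, ← RZ.bt_ofFn] at hE1
  set B := List.ofFn (fun i => (b i, c i)) with hB
  set G := List.ofFn (fun i => (g i, h i)) with hG
  have hEnc : RZ.Enc π (RZ.PW a d e f z B G) := ⟨hE0, hE1⟩
  have haz : a ≠ z := by
    rintro rfl
    omega
  have hgen := RZ.gen (RZ.HG (RZ.PW a d e f z B G)) a z haz
    (fun t ht => RZ.three_pair hE0.nodup hE1.nodup t (hE0.mem t) ht)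
  refine ⟨?_, ?_, ?_⟩
  · intro k hk
    have h1 := hk a (by rw [Fin.le_def]; omega)
    rw [Fin.le_def] at h1
    have := k.isLt
    omega
  · intro σ hσ
    have hs : Equiv.Perm.sign σ = 1 := Equiv.Perm.mem_alternatingGroup.1 hσ
    rcases hgen σ with h1 | h1
    · exact RZ.mem_ren hEnc h1.2
    · rw [hs] at h1
      exact absurd h1.1 (by decide)
  · intro hmn
    rw [Set.eq_univ_iff_forall]
    intro σ
    have hD : RZ.Dj a d e f z [] G B := by
      unfold RZ.Dj
      refine (List.Perm.nodup_iff ?_).1 hE0.nodup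
      rw [List.perm_iff_count]
      intro y
      simp [List.count_cons]
      ring
    obtain ⟨τ, hτ, hτs⟩ := RZ.odd_mem hD (by simp [hB, hG, hmn])
    refine RZ.mem_ren hEnc ?_
    rcases hgen σ with h1 | h1
    · exact h1.2
    · rcases hgen (τ⁻¹ * σ) with h2 | h2
      · have := (RZ.HG (RZ.PW a d e f z B G)).mul_mem hτ h2.2
        simpa using this
      · exfalso
        have h3 := h2.1
        rw [Equiv.Perm.sign_mul, Equiv.Perm.sign_inv, hτs, h1.1] at h3
        exact absurd h3 (by decide)
end
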